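/- Let μ ∈ M(0,1), and for large n set κ_n² = (∫ Q_n²(x) r(x) dμ(x))^{−1} and let τ_n be the (positive) leading coefficient of the nth orthonormal polynomial l_n with respect to μ. Then lim_{n→∞} κ_n²/τ_n² = (−2)^{A−B} · ∏_{j=1}^{ℓ} φ(d_j)^{B_j} / ∏_{i=1}^{h} φ(c_i)^{A_i}. -/

import Mathlib

open MeasureTheory Polynomial Filter Topology Set
open scoped Classical

/-- The branch of `√(z²-1)` on `ℂ ∖ [-1,1]` that is positive for `z > 1`. -/
noncomputable def sqrtB (z : ℂ) : ℂ := z * (1 - 1 / z ^ 2) ^ ((1 : ℂ) / 2)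

/-- `φ(z) = z + √(z²-1)`, the conformal map of `ℂ ∖ [-1,1]` onto the exterior
of the closed unit disk. -/
noncomputable def phi (z : ℂ) : ℂ := z + sqrtB z

/-- The support of a measure on `ℝ`: points all of whose neighborhoods have
positive measure. -/
def msupp (μ : Measure ℝ) : Set ℝ := {x | ∀ U ∈ nhds x, μ U ≠ 0}

/-- The support `S_μ`, viewed as a subset of `ℂ`. -/
def msuppC (μ : Measure ℝ) : Set ℂ := Complex.ofReal '' msupp μ

/-- `l` is the sequence of orthonormal polynomials of the measure `μ`:
degree `n`, positive leading coefficient, `∫ l_m l_n dμ = δ_{mn}`. -/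
structure IsOrthonormalPolys (μ : Measure ℝ) (l : ℕ → Polynomial ℝ) : Prop where
  natDegree_eq : ∀ n, (l n).natDegree = n
  leadingCoeff_pos : ∀ n, 0 < (l n).leadingCoeff
  orthonormal : ∀ m n, ∫ x, (l m).eval x * (l n).eval x ∂μ = if m = n then 1 else 0

/-- `μ ∈ M(0,1)`: the recurrence coefficients of the orthonormal polynomials
`l_n` satisfy `a_n → 1/2`, `b_n → 0`, where
`x·l_n = a_{n+1} l_{n+1} + b_n l_n + a_n l_{n-1}`. -/
structure IsM01 (μ : Measure ℝ) (l : ℕ → Polynomial ℝ) (a b : ℕ → ℝ) : Prop where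
  onp : IsOrthonormalPolys μ l
  recurrence_zero : X * l 0 = a 1 • l 1 + b 0 • l 0
  recurrence : ∀ n : ℕ,
    X * l (n + 1) = a (n + 2) • l (n + 2) + b (n + 1) • l (n + 1) + a (n + 1) • l n
  tendsto_a : Tendsto a atTop (nhds (1 / 2))
  tendsto_b : Tendsto b atTop (nhds 0)

/-- The rational function `r = S/T` with
`S(z) = ∏ (z-c_i)^{A_i}`, `T(z) = ∏ (z-d_j)^{B_j}`, evaluated on the real line. -/
noncomputable def ratFn {h ℓ : ℕ} (c : Fin h → ℂ) (d : Fin ℓ → ℂ)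
    (A : Fin h → ℕ) (B : Fin ℓ → ℕ) (x : ℝ) : ℂ :=
  (∏ i, ((x : ℂ) - c i) ^ (A i)) / ∏ j, ((x : ℂ) - d j) ^ (B j)

/-- `Q` is the monic polynomial of least degree, not identically zero, with
`∫ p(x) Q(x) r(x) dμ(x) = 0` for every polynomial `p` of degree `≤ n-1`. -/
def IsQPoly (μ : Measure ℝ) (r : ℝ → ℂ) (n : ℕ) (Q : Polynomial ℂ) : Prop :=
  Q.Monic ∧
  (∀ p : Polynomial ℂ, p.degree < n →
    ∫ x, p.eval (x : ℂ) * Q.eval (x : ℂ) * r x ∂μ = 0) ∧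
  (∀ q : Polynomial ℂ, q ≠ 0 →
    (∀ p : Polynomial ℂ, p.degree < n →
      ∫ x, p.eval (x : ℂ) * q.eval (x : ℂ) * r x ∂μ = 0) →
    Q.degree ≤ q.degree)


/-! ### Facts about `phi` -/

lemma cpow_half_sq (w : ℂ) : (w ^ ((1 : ℂ) / 2)) ^ 2 = w := by
  have h := Complex.cpow_nat_inv_pow w (n := 2) (by norm_num)
  rw [one_div]
  exact h

lemma phi_facts (z : ℂ) (hz : ∀ x : ℝ, x ∈ Icc (-1 : ℝ) 1 → z ≠ x) :
    phi z + (phi z)⁻¹ = 2 * z ∧ 1 < ‖phi z‖ ∧ ContinuousAt phi z := by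
  have hz0 : z ≠ 0 := by simpa using hz 0 (by norm_num)
  have hs : (1 - 1 / z ^ 2) ∈ Complex.slitPlane := by
    by_contra hcon
    rw [Complex.mem_slitPlane_iff, not_or, not_lt, not_not] at hcon
    obtain ⟨h1, h2⟩ := hcon
    set w : ℂ := 1 / z ^ 2 with hw
    have hwi : w.im = 0 := by simpa using h2
    have hwr : 1 ≤ w.re := by simpa using h1
    have hwe : w = (w.re : ℂ) := by
      apply Complex.ext <;> simp [hwi]
    have hz2 : z ^ 2 = ((w.re)⁻¹ : ℝ) := by
      push_cast
      rw [← hwe, hw]; simp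
    have hnn : 0 ≤ (w.re)⁻¹ := by positivity
    have hfac : (z - (Real.sqrt (w.re)⁻¹ : ℝ)) * (z - (-Real.sqrt (w.re)⁻¹ : ℝ)) = 0 := by
      have : ((Real.sqrt (w.re)⁻¹ : ℝ) : ℂ) ^ 2 = ((w.re)⁻¹ : ℝ) := by
        rw [← Complex.ofReal_pow, Real.sq_sqrt hnn]
      push_cast at this hz2 ⊢
      linear_combination hz2 - this
    have hle : Real.sqrt (w.re)⁻¹ ≤ 1 := by
      rw [Real.sqrt_le_one]; exact inv_le_one_of_one_le₀ hwr
    have hge := Real.sqrt_nonneg (w.re)⁻¹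
    rcases mul_eq_zero.1 hfac with h | h
    · exact hz _ ⟨by linarith, hle⟩ (sub_eq_zero.1 h)
    · exact hz _ ⟨by linarith, by linarith⟩ (sub_eq_zero.1 h)
  set s : ℂ := (1 - 1 / z ^ 2) ^ ((1 : ℂ) / 2) with hsdef
  have hs2 : s ^ 2 = 1 - 1 / z ^ 2 := by
    rw [hsdef]
    exact cpow_half_sq _
  have hsre : 0 < s.re := by
    rw [hsdef, Complex.cpow_def_of_ne_zero (Complex.slitPlane_ne_zero hs), Complex.exp_re]
    apply mul_pos (Real.exp_pos _)
    have h1 := Complex.abs_arg_lt_pi_div_two_iff (z := 0)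
    have him : (Complex.log (1 - 1 / z ^ 2) * (1 / 2)).im = Complex.arg (1 - 1 / z ^ 2) / 2 := by
      have : (1 / 2 : ℂ) = ((1 / 2 : ℝ) : ℂ) := by push_cast; rfl
      rw [this, Complex.im_mul_ofReal, Complex.log_im]; ring
    rw [him]
    apply Real.cos_pos_of_mem_Ioo
    have ha := Complex.neg_pi_lt_arg (1 - 1 / z ^ 2)
    have hb := lt_of_le_of_ne (Complex.arg_le_pi (1 - 1 / z ^ 2))
      (Complex.slitPlane_arg_ne_pi hs)
    constructor <;> linarith
  have hphi : phi z = z * (1 + s) := by rw [phi, sqrtB, ← hsdef]; ring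
  have hprod : phi z * (z * (1 - s)) = 1 := by
    rw [hphi]
    have : z * (1 + s) * (z * (1 - s)) = z ^ 2 * (1 - s ^ 2) := by ring
    rw [this, hs2]; field_simp; ring
  have hinv : (phi z)⁻¹ = z * (1 - s) := 
    inv_eq_of_mul_eq_one_right hprod
  have hne : phi z ≠ 0 := left_ne_zero_of_mul_eq_one hprod
  refine ⟨by rw [hinv, hphi]; ring, ?_, ?_⟩
  · have h1 : ‖phi z‖ * ‖z * (1 - s)‖ = 1 := by rw [← norm_mul, hprod, norm_one]
    have h2 : ‖z * (1 - s)‖ < ‖phi z‖ := by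
      rw [hphi, norm_mul, norm_mul]
      apply mul_lt_mul_of_pos_left _ (norm_pos_iff.2 hz0)
      rw [← sq_lt_sq₀ (norm_nonneg _) (norm_nonneg _), ← Complex.normSq_eq_norm_sq,
        ← Complex.normSq_eq_norm_sq, Complex.normSq_apply, Complex.normSq_apply]
      simp; nlinarith
    by_contra hcon
    push Not at hcon
    nlinarith [norm_nonneg (phi z), norm_nonneg (z * (1 - s))]
  · unfold phi sqrtB
    apply ContinuousAt.add continuousAt_id
    apply ContinuousAt.mul continuousAt_id
    have h1 : ContinuousAt (fun z : ℂ => 1 - 1 / z ^ 2) z :=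
      continuousAt_const.sub (continuousAt_const.div (by fun_prop) (pow_ne_zero _ hz0))
    exact h1.cpow continuousAt_const hs

/-! ### Support -/

lemma msupp_compl_null (μ : Measure ℝ) : μ (msupp μ)ᶜ = 0 := by
  apply measure_null_of_locally_null
  intro x hx
  have hx' : ¬ ∀ U ∈ nhds x, μ U ≠ 0 := hx
  push Not at hx'
  obtain ⟨U, hU, h0⟩ := hx'
  exact ⟨U, mem_nhdsWithin_of_mem_nhds hU, h0⟩

lemma ae_msupp (μ : Measure ℝ) : ∀ᵐ x ∂μ, x ∈ msupp μ := by
  rw [ae_iff]; exact msupp_compl_null μ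

lemma restrict_msupp (μ : Measure ℝ) : μ.restrict (msupp μ) = μ :=
  Measure.restrict_eq_self_of_ae_mem (ae_msupp μ)

lemma integ {μ : Measure ℝ} [IsFiniteMeasure μ] (hK : IsCompact (msupp μ)) {f : ℝ → ℂ}
    (hf : ContinuousOn f (msupp μ)) : Integrable f μ := by
  have := hf.integrableOn_compact (μ := μ) hK
  rwa [IntegrableOn, restrict_msupp] at this

lemma msuppC_closed {μ : Measure ℝ} (hK : IsCompact (msupp μ)) : IsClosed (msuppC μ) :=
  (hK.image Complex.continuous_ofReal).isClosed

lemma sub_ne {μ : Measure ℝ} {z : ℂ} (hz : z ∉ msuppC μ) {x : ℝ} (hx : x ∈ msupp μ) :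
    (x : ℂ) - z ≠ 0 := by
  intro h
  exact hz ⟨x, hx, (sub_eq_zero.1 h)⟩

lemma dist_lower {μ : Measure ℝ} (hK : IsCompact (msupp μ)) {z : ℂ} (hz : z ∉ msuppC μ) :
    ∃ δ > 0, (∀ y ∈ Metric.ball z δ, y ∉ msuppC μ ∧ ∀ x ∈ msupp μ, δ ≤ ‖(x : ℂ) - y‖) := by
  obtain ⟨ε, hε, hb⟩ := Metric.isOpen_iff.1 (msuppC_closed hK).isOpen_compl z hz
  refine ⟨ε / 2, by positivity, fun y hy => ⟨hb (Metric.ball_subset_ball (by linarith) hy), ?_⟩⟩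
  intro x hx
  by_contra hcon
  push Not at hcon
  have : (x : ℂ) ∈ Metric.ball z ε := by
    rw [Metric.mem_ball] at hy ⊢
    calc dist (x : ℂ) z ≤ dist (x : ℂ) y + dist y z := dist_triangle _ _ _
      _ < ε := by rw [dist_eq_norm (x : ℂ) y]; linarith
  exact hb this ⟨x, hx, rfl⟩

lemma cont_poly (s : Set ℝ) (p : Polynomial ℂ) : ContinuousOn (fun x : ℝ => p.eval (x : ℂ)) s :=
  (p.continuous.comp Complex.continuous_ofReal).continuousOn

lemma cont_cauchy {μ : Measure ℝ} {z : ℂ} (hz : z ∉ msuppC μ) :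
    ContinuousOn (fun x : ℝ => ((x : ℂ) - z)⁻¹) (msupp μ) :=
  ContinuousOn.inv₀ (by fun_prop) (fun _ hx => sub_ne hz hx)

/-- Stieltjes transforms are holomorphic off the support. -/
lemma stieltjes_diff {μ : Measure ℝ} [IsFiniteMeasure μ] (hK : IsCompact (msupp μ)) {f : ℝ → ℂ}
    (hf : ContinuousOn f (msupp μ)) {z : ℂ} (hz : z ∉ msuppC μ) :
    DifferentiableAt ℂ (fun y : ℂ => ∫ x, f x * ((x : ℂ) - y)⁻¹ ∂μ) z := by
  obtain ⟨δ, hδ, hb⟩ := dist_lower hK hz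
  have key := hasDerivAt_integral_of_dominated_loc_of_deriv_le (μ := μ) (𝕜 := ℂ)
    (F := fun (y : ℂ) (x : ℝ) => f x * ((x : ℂ) - y)⁻¹)
    (F' := fun (y : ℂ) (x : ℝ) => f x * (((x : ℂ) - y) ^ 2)⁻¹)
    (x₀ := z) (s := Metric.ball z δ) (bound := fun x => ‖f x‖ * (δ ^ 2)⁻¹)
    (Metric.ball_mem_nhds z hδ) ?_ ?_ ?_ ?_ ?_ ?_
  · exact key.2.differentiableAt
  · filter_upwards [Metric.ball_mem_nhds z hδ] with y hy
    exact (integ hK (hf.mul (cont_cauchy (hb y hy).1))).aestronglyMeasurable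
  · exact integ hK (hf.mul (cont_cauchy hz))
  · refine (integ hK (hf.mul ?_)).aestronglyMeasurable
    exact ContinuousOn.inv₀ (by fun_prop) (fun _ hx => pow_ne_zero _ (sub_ne hz hx))
  · filter_upwards [ae_msupp μ] with x hx y hy
    rw [norm_mul, norm_inv, norm_pow]
    have := (hb y hy).2 x hx
    gcongr
  · exact (integ hK hf).norm.mul_const _
  · filter_upwards [ae_msupp μ] with x hx y hy
    have hne := sub_ne (hb y hy).1 hx
    have h1 : HasDerivAt (fun y : ℂ => (x : ℂ) - y) (-1) y := by
      simpa using (hasDerivAt_id y).const_sub (x : ℂ)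
    have h2 := (h1.inv hne).const_mul (f x)
    refine h2.congr_deriv ?_
    simp

/-! ### Convergence lemmas -/

lemma shift_down {F : ℕ → ℂ → ℂ} {z w : ℂ}
    (h : Tendsto (fun p : ℕ × ℂ => F (p.1 + 1) p.2) (atTop ×ˢ 𝓝 z) (𝓝 w)) :
    Tendsto (fun p : ℕ × ℂ => F p.1 p.2) (atTop ×ˢ 𝓝 z) (𝓝 w) := by
  have e : (atTop ×ˢ 𝓝 z : Filter (ℕ × ℂ)) =
      map (Prod.map (fun n : ℕ => n + 1) id) (atTop ×ˢ 𝓝 z) := by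
    rw [← Filter.prod_map_map_eq', map_add_atTop_eq_nat, Filter.map_id]
  rw [e, tendsto_map'_iff]
  exact h

lemma shift_up {F : ℕ → ℂ → ℂ} {z w : ℂ}
    (h : Tendsto (fun p : ℕ × ℂ => F p.1 p.2) (atTop ×ˢ 𝓝 z) (𝓝 w)) :
    Tendsto (fun p : ℕ × ℂ => F (p.1 + 1) p.2) (atTop ×ˢ 𝓝 z) (𝓝 w) := by
  have e : map (Prod.map (fun n : ℕ => n + 1) id) (atTop ×ˢ 𝓝 z) =
      (atTop ×ˢ 𝓝 z : Filter (ℕ × ℂ)) := by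
    rw [← Filter.prod_map_map_eq', map_add_atTop_eq_nat, Filter.map_id]
  rw [← e, tendsto_map'_iff] at h
  exact h

lemma at_point {F : ℕ → ℂ → ℂ} {z w : ℂ}
    (h : Tendsto (fun p : ℕ × ℂ => F p.1 p.2) (atTop ×ˢ 𝓝 z) (𝓝 w)) :
    Tendsto (fun n => F n z) atTop (𝓝 w) :=
  h.comp (Filter.tendsto_id.prodMk (tendsto_const_pure.mono_right (pure_le_nhds z)))

lemma ratio_lemma {u v : ℕ → ℂ → ℂ} {z r h : ℂ} (hr : r ≠ 0) (hh : h ≠ 0)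
    (h1 : Tendsto (fun p : ℕ × ℂ => u (p.1 + 1) p.2 / u p.1 p.2) (atTop ×ˢ 𝓝 z) (𝓝 r))
    (h2 : Tendsto (fun p : ℕ × ℂ => v p.1 p.2 / u p.1 p.2) (atTop ×ˢ 𝓝 z) (𝓝 h)) :
    Tendsto (fun p : ℕ × ℂ => v (p.1 + 1) p.2 / v p.1 p.2) (atTop ×ˢ 𝓝 z) (𝓝 r) := by
  have h3 := shift_up (F := fun n y => v n y / u n y) h2
  have h4 := (h3.div h2 hh).mul h1
  rw [div_self hh, one_mul] at h4
  refine h4.congr' ?_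
  filter_upwards [h1.eventually_ne hr, h2.eventually_ne hh] with p hp1 hp2
  have hu1 : u (p.1 + 1) p.2 ≠ 0 := fun h => hp1 (by simp [h])
  have hu0 : u p.1 p.2 ≠ 0 := fun h => hp1 (by simp [h])
  have hv0 : v p.1 p.2 ≠ 0 := fun h => hp2 (by simp [h])
  simp only [Pi.div_apply]
  field_simp

lemma removable {H : ℕ → ℂ → ℂ} {h : ℂ → ℂ} {c : ℂ} {U : Set ℂ} (hU : U ∈ 𝓝 c)
    (hcont : ContinuousAt h c)
    (hdiff : ∀ᶠ p : ℕ × ℂ in atTop ×ˢ 𝓝 c, DifferentiableAt ℂ (H p.1) p.2)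
    (hlim : ∀ z ∈ U, z ≠ c → Tendsto (fun p : ℕ × ℂ => H p.1 p.2) (atTop ×ˢ 𝓝 z) (𝓝 (h z))) :
    Tendsto (fun p : ℕ × ℂ => H p.1 p.2) (atTop ×ˢ 𝓝 c) (𝓝 (h c)) := by
  rw [Metric.tendsto_nhds]
  intro ε hε
  have hc2 := Metric.tendsto_nhds.1 hcont (ε / 2) (by positivity)
  obtain ⟨pa, hpa, pb, hpb, hd⟩ := Filter.eventually_prod_iff.1 hdiff
  obtain ⟨r, hr, hball⟩ := Metric.eventually_nhds_iff_ball.1 ((hc2.and hpb).and hU)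
  have hr2 : 0 < r / 2 := by positivity
  have hsph : ∀ᶠ n in atTop, ∀ z ∈ Metric.sphere c (r / 2), dist (H n z) (h c) ≤ ε / 2 + ε / 4 := by
    have hcomp : IsCompact (Metric.sphere c (r / 2)) := isCompact_sphere _ _
    refine hcomp.induction_on (p := fun s => ∀ᶠ n in atTop, ∀ z ∈ s,
      dist (H n z) (h c) ≤ ε / 2 + ε / 4) (by simp) ?_ ?_ ?_
    · intro s t hst ht
      filter_upwards [ht] with n hn z hz using hn z (hst hz)
    · intro s t hs ht
      filter_upwards [hs, ht] with n hn hn' z hz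
      exact hz.elim (hn z) (hn' z)
    intro z hz
    have hzc : z ≠ c := by
      intro hzc; rw [hzc, Metric.mem_sphere, dist_self] at hz; linarith
    have hzb : z ∈ Metric.ball c r := by
      rw [Metric.mem_ball, Metric.mem_sphere.1 hz]; linarith
    have := Metric.tendsto_nhds.1 (hlim z (hball z hzb).2 hzc) (ε / 4) (by positivity)
    obtain ⟨qa, hqa, qb, hqb, hq⟩ := Filter.eventually_prod_iff.1 this
    refine ⟨{y | qb y}, mem_nhdsWithin_of_mem_nhds hqb, ?_⟩
    filter_upwards [hqa] with n hn y hy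
    have h3 := (hball z hzb).1.1
    have h4 := hq hn hy
    have := dist_triangle (H n y) (h z) (h c)
    simp only at h4
    linarith
  have : ∀ᶠ p : ℕ × ℂ in atTop ×ˢ 𝓝 c, (pa p.1 ∧ ∀ z ∈ Metric.sphere c (r / 2),
      dist (H p.1 z) (h c) ≤ ε / 2 + ε / 4) ∧ p.2 ∈ Metric.ball c (r / 2) :=
    (hpa.and hsph).prod_mk (Metric.ball_mem_nhds c hr2)
  filter_upwards [this] with p hp
  obtain ⟨⟨hp1, hp2⟩, hp3⟩ := hp
  have hsub : Metric.closedBall c (r / 2) ⊆ Metric.ball c r :=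
    Metric.closedBall_subset_ball (by linarith)
  have hdc : DiffContOnCl ℂ (fun z => H p.1 z - h c) (Metric.ball c (r / 2)) := by
    apply DifferentiableOn.diffContOnCl
    rw [closure_ball c hr2.ne']
    intro z hz
    exact ((hd hp1 (hball z (hsub hz)).1.2).sub_const _).differentiableWithinAt
  have := Complex.norm_le_of_forall_mem_frontier_norm_le Metric.isBounded_ball hdc
    (C := ε / 2 + ε / 4) (by
      rw [frontier_ball c hr2.ne']
      intro z hz
      rw [← dist_eq_norm]; exact hp2 z hz) (subset_closure hp3)
  rw [← dist_eq_norm] at this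
  linarith

lemma key_ratio {u v : ℕ → ℂ → ℂ} {s k : ℂ → ℂ} {U : Set ℂ} {c : ℂ} (hU : IsOpen U) (hc : c ∈ U)
    (hu : ∀ n, ∀ z ∈ U, DifferentiableAt ℂ (u n) z)
    (hv : ∀ n, ∀ z ∈ U, DifferentiableAt ℂ (v n) z)
    (hs0 : ∀ z ∈ U, s z ≠ 0) (hk0 : ∀ z ∈ U, k z ≠ 0) (hk : ContinuousAt k c)
    (hsk : ∀ z ∈ U, (z - c) * k z = s z - s c)
    (hlim : ∀ z ∈ U, Tendsto (fun p : ℕ × ℂ => u (p.1 + 1) p.2 / u p.1 p.2)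
      (atTop ×ˢ 𝓝 z) (𝓝 (s z)))
    (heq : ∀ᶠ n in atTop, ∀ z ∈ U, (z - c) * v n z = u (n + 1) z - u (n + 1) c / u n c * u n z) :
    ∀ z ∈ U, Tendsto (fun p : ℕ × ℂ => v (p.1 + 1) p.2 / v p.1 p.2)
      (atTop ×ˢ 𝓝 z) (𝓝 (s z)) := by
  have hne : ∀ z ∈ U, ∀ᶠ p : ℕ × ℂ in atTop ×ˢ 𝓝 z, u p.1 p.2 ≠ 0 := by
    intro z hz
    filter_upwards [(hlim z hz).eventually_ne (hs0 z hz)] with p hp h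
    exact hp (by simp [h])
  have hconst : Tendsto (fun n => u (n + 1) c / u n c) atTop (𝓝 (s c)) :=
    at_point (F := fun n y => u (n + 1) y / u n y) (hlim c hc)
  have hoff : ∀ z ∈ U, z ≠ c → Tendsto (fun p : ℕ × ℂ => (fun n y => v n y / u n y) p.1 p.2)
      (atTop ×ˢ 𝓝 z) (𝓝 (k z)) := by
    intro z hz hzc
    have h1 : Tendsto (fun p : ℕ × ℂ => (u (p.1 + 1) p.2 / u p.1 p.2 -
        u (p.1 + 1) c / u p.1 c) / (p.2 - c)) (atTop ×ˢ 𝓝 z) (𝓝 ((s z - s c) / (z - c))) := by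
      refine ((hlim z hz).sub (hconst.comp tendsto_fst)).div ?_ (sub_ne_zero.2 hzc)
      exact tendsto_snd.sub_const c
    have e : (s z - s c) / (z - c) = k z := by
      rw [← hsk z hz]; field_simp [sub_ne_zero.2 hzc]
    rw [e] at h1
    refine h1.congr' ?_
    have hev : ∀ᶠ p : ℕ × ℂ in atTop ×ˢ 𝓝 z, (∀ y ∈ U, (y - c) * v p.1 y =
        u (p.1 + 1) y - u (p.1 + 1) c / u p.1 c * u p.1 y) ∧ (p.2 ∈ U ∧ p.2 ≠ c) :=
      heq.prod_mk (Filter.Eventually.and (hU.mem_nhds hz) (eventually_ne_nhds hzc))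
    filter_upwards [hev, hne z hz] with p hp hp2
    have h3 := hp.1 p.2 hp.2.1
    have h4 : p.2 - c ≠ 0 := sub_ne_zero.2 hp.2.2
    rw [div_eq_div_iff h4 hp2, sub_mul, div_mul_cancel₀ _ hp2, ← h3]; ring
  have hall : ∀ z ∈ U, Tendsto (fun p : ℕ × ℂ => (fun n y => v n y / u n y) p.1 p.2)
      (atTop ×ˢ 𝓝 z) (𝓝 (k z)) := by
    intro z hz
    by_cases hzc : z = c
    · subst hzc
      refine removable (H := fun n y => v n y / u n y) (hU.mem_nhds hz) hk ?_ hoff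
      have hev : ∀ᶠ p : ℕ × ℂ in atTop ×ˢ 𝓝 z, p.2 ∈ U :=
        tendsto_snd.eventually (hU.mem_nhds hz)
      filter_upwards [hev, hne z hz] with p hp hp2
      exact (hv _ _ hp).div (hu _ _ hp) hp2
    · exact hoff z hz hzc
  intro z hz
  exact ratio_lemma (hs0 z hz) (hk0 z hz) (hlim z hz) (hall z hz)

/-! ### The base case: Green functions -/

/-- The complexified polynomials. -/
noncomputable def lC (l : ℕ → Polynomial ℝ) (n : ℕ) : Polynomial ℂ := (l n).map Complex.ofRealHom

lemma lC_eval (l : ℕ → Polynomial ℝ) (n : ℕ) (x : ℝ) :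
    (lC l n).eval (x : ℂ) = (((l n).eval x : ℝ) : ℂ) := by
  rw [lC, ← Complex.ofRealHom_eq_coe, Polynomial.eval_map_apply]
  rfl

/-- The Green function `∫ l_n l_m / (x - z) dμ`. -/
noncomputable def green (μ : Measure ℝ) (l : ℕ → Polynomial ℝ) (z : ℂ) (n m : ℕ) : ℂ :=
  ∫ x : ℝ, (lC l n).eval (x : ℂ) * (lC l m).eval (x : ℂ) * ((x : ℂ) - z)⁻¹ ∂μ

lemma green_symm (μ : Measure ℝ) (l : ℕ → Polynomial ℝ) (z : ℂ) (n m : ℕ) :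
    green μ l z n m = green μ l z m n := by
  unfold green; congr 1; ext x; ring

lemma lC_orth {μ : Measure ℝ} {l : ℕ → Polynomial ℝ} (ho : IsOrthonormalPolys μ l) (n m : ℕ) :
    ∫ x : ℝ, (lC l n).eval (x : ℂ) * (lC l m).eval (x : ℂ) ∂μ = if n = m then 1 else 0 := by
  simp_rw [lC_eval, ← Complex.ofReal_mul]
  rw [integral_complex_ofReal, ho.orthonormal]
  split_ifs <;> simp

lemma weighted_bound {μ : Measure ℝ} [IsFiniteMeasure μ] (hK : IsCompact (msupp μ))
    {l : ℕ → Polynomial ℝ} (ho : IsOrthonormalPolys μ l) {f : ℝ → ℂ} {M : ℝ} (hM : 0 ≤ M)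
    (hf : ∀ x ∈ msupp μ, ‖f x‖ ≤ M) (n m : ℕ) :
    ‖∫ x : ℝ, (lC l n).eval (x : ℂ) * (lC l m).eval (x : ℂ) * f x ∂μ‖ ≤ M := by
  have hint : ∀ k, Integrable (fun x : ℝ => (l k).eval x * (l k).eval x) μ := by
    intro k
    have h1 : ContinuousOn (fun x : ℝ => (l k).eval x * (l k).eval x) (msupp μ) := by fun_prop
    have := h1.integrableOn_compact (μ := μ) hK
    rwa [IntegrableOn, restrict_msupp] at this
  have h1 : ‖∫ x : ℝ, (lC l n).eval (x : ℂ) * (lC l m).eval (x : ℂ) * f x ∂μ‖ ≤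
      ∫ x : ℝ, M / 2 * ((l n).eval x * (l n).eval x + (l m).eval x * (l m).eval x) ∂μ := by
    apply norm_integral_le_of_norm_le (((hint n).add (hint m)).const_mul _)
    filter_upwards [ae_msupp μ] with x hx
    rw [norm_mul, norm_mul, lC_eval, lC_eval, Complex.norm_real, Complex.norm_real,
      Real.norm_eq_abs, Real.norm_eq_abs]
    have h2 := hf x hx
    have h3 : |(l n).eval x| * |(l m).eval x| ≤
        ((l n).eval x * (l n).eval x + (l m).eval x * (l m).eval x) / 2 := by
      have := sq_nonneg (|(l n).eval x| - |(l m).eval x|)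
      nlinarith [abs_mul_abs_self ((l n).eval x), abs_mul_abs_self ((l m).eval x)]
    calc |(l n).eval x| * |(l m).eval x| * ‖f x‖
        ≤ ((l n).eval x * (l n).eval x + (l m).eval x * (l m).eval x) / 2 * M := by
          gcongr
          exact le_trans (by positivity) h3
      _ = _ := by simp only [Pi.add_apply]; ring
  refine h1.trans (le_of_eq ?_)
  rw [integral_const_mul, integral_add (hint n) (hint m), ho.orthonormal, ho.orthonormal]
  simp; ring

lemma green_bound {μ : Measure ℝ} [IsFiniteMeasure μ] (hK : IsCompact (msupp μ))
    {l : ℕ → Polynomial ℝ} (ho : IsOrthonormalPolys μ l) {z : ℂ} (hz : z ∉ msuppC μ) :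
    ∃ M, ∀ n m, ‖green μ l z n m‖ ≤ M := by
  obtain ⟨δ, hδ, hb⟩ := dist_lower hK hz
  refine ⟨δ⁻¹, fun n m => weighted_bound hK ho (by positivity) ?_ n m⟩
  intro x hx
  rw [norm_inv]
  have := (hb z (Metric.mem_ball_self hδ)).2 x hx
  gcongr

lemma green_lip {μ : Measure ℝ} [IsFiniteMeasure μ] (hK : IsCompact (msupp μ))
    {l : ℕ → Polynomial ℝ} (ho : IsOrthonormalPolys μ l) {z : ℂ} (hz : z ∉ msuppC μ) :
    ∃ δ > 0, ∃ M, ∀ y ∈ Metric.ball z δ, y ∉ msuppC μ ∧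
      ∀ n m, ‖green μ l y n m - green μ l z n m‖ ≤ M * ‖y - z‖ := by
  obtain ⟨δ, hδ, hb⟩ := dist_lower hK hz
  refine ⟨δ, hδ, δ⁻¹ * δ⁻¹, fun y hy => ⟨(hb y hy).1, fun n m => ?_⟩⟩
  have hyz := (hb y hy).1
  unfold green
  have hi : ∀ w, w ∉ msuppC μ → Integrable (fun x : ℝ => (lC l n).eval (x : ℂ) *
      (lC l m).eval (x : ℂ) * ((x : ℂ) - w)⁻¹) μ := fun w hw =>
    integ hK (((cont_poly _ _).mul (cont_poly _ _)).mul (cont_cauchy hw))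
  rw [← integral_sub (hi _ hyz) (hi _ hz)]
  simp_rw [← mul_sub]
  apply weighted_bound hK ho (by positivity)
  intro x hx
  have h1 := sub_ne hz hx
  have h2 := sub_ne hyz hx
  have e : ((x : ℂ) - y)⁻¹ - ((x : ℂ) - z)⁻¹ = ((x : ℂ) - y)⁻¹ * ((x : ℂ) - z)⁻¹ * (y - z) := by
    field_simp; ring
  rw [e, norm_mul, norm_mul, norm_inv, norm_inv]
  have h3 := (hb y hy).2 x hx
  have h4 := (hb z (Metric.mem_ball_self hδ)).2 x hx
  gcongr

lemma green_rec {μ : Measure ℝ} [IsFiniteMeasure μ] (hK : IsCompact (msupp μ))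
    {l : ℕ → Polynomial ℝ} {a b : ℕ → ℝ} (hM : IsM01 μ l a b) {z : ℂ} (hz : z ∉ msuppC μ)
    (n m : ℕ) :
    (a (n + 2) : ℂ) * green μ l z (n + 2) m + (b (n + 1) : ℂ) * green μ l z (n + 1) m
      + (a (n + 1) : ℂ) * green μ l z n m = (if n + 1 = m then 1 else 0)
      + z * green μ l z (n + 1) m := by
  have hi : ∀ k, Integrable (fun x : ℝ => (lC l k).eval (x : ℂ) * (lC l m).eval (x : ℂ) *
      ((x : ℂ) - z)⁻¹) μ := fun k =>
    integ hK (((cont_poly _ _).mul (cont_poly _ _)).mul (cont_cauchy hz))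
  have hi2 : Integrable (fun x : ℝ => (lC l (n + 1)).eval (x : ℂ) * (lC l m).eval (x : ℂ)) μ :=
    integ hK ((cont_poly _ _).mul (cont_poly _ _))
  rw [← lC_orth hM.onp]
  unfold green
  rw [← integral_const_mul, ← integral_const_mul, ← integral_const_mul, ← integral_const_mul,
    ← integral_add ((hi _).const_mul _) ((hi _).const_mul _),
    ← integral_add (by exact ((hi _).const_mul _).add ((hi _).const_mul _)) ((hi _).const_mul _),
    ← integral_add hi2 ((hi _).const_mul _)]
  apply integral_congr_ae
  filter_upwards [ae_msupp μ] with x hx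
  have hne := sub_ne hz hx
  have hr := congrArg (fun p => ((p.eval x : ℝ) : ℂ)) (hM.recurrence n)
  simp only [Polynomial.eval_mul, Polynomial.eval_X, Polynomial.eval_add, Polynomial.eval_smul,
    smul_eq_mul] at hr
  push_cast at hr
  simp only [← lC_eval] at hr
  have e : (lC l (n + 1)).eval (x : ℂ) * (lC l m).eval (x : ℂ) =
    (lC l (n + 1)).eval (x : ℂ) * (lC l m).eval (x : ℂ) * ((x : ℂ) - z) * ((x : ℂ) - z)⁻¹ := by
    field_simp
  linear_combination (-(lC l m).eval (x : ℂ) * ((x : ℂ) - z)⁻¹) * hr - e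

lemma bounded_rec {g : ℕ → ℂ} {z p : ℂ} (hp : p + p⁻¹ = 2 * z) (hp1 : 1 < ‖p‖) {M : ℝ}
    (hb : ∀ k, ‖g k‖ ≤ M) (hr : ∀ k, g (k + 2) + g k = 2 * z * g (k + 1)) : g 1 = g 0 / p := by
  have hp0 : p ≠ 0 := by intro h; rw [h, norm_zero] at hp1; linarith
  have hstep : ∀ k, g (k + 1) - g k / p = p ^ k * (g 1 - g 0 / p) := by
    intro k
    induction k with
    | zero => simp
    | succ k ih =>
      have h1 := hr k
      rw [← hp] at h1
      rw [pow_succ', mul_assoc, ← ih]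
      field_simp at h1 ⊢
      linear_combination h1
  by_contra hne
  have hpos : 0 < ‖g 1 - g 0 / p‖ := norm_pos_iff.2 (sub_ne_zero.2 hne)
  have ht := (tendsto_pow_atTop_atTop_of_one_lt hp1).atTop_mul_const hpos
  obtain ⟨k, hk⟩ := (ht.eventually_gt_atTop (M + M)).exists
  have h1 : ‖p‖ ^ k * ‖g 1 - g 0 / p‖ = ‖g (k + 1) - g k / p‖ := by
    rw [hstep k, norm_mul, norm_pow]
  have h2 : ‖g (k + 1) - g k / p‖ ≤ ‖g (k + 1)‖ + ‖g k / p‖ := norm_sub_le _ _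
  have h3 : ‖g k / p‖ ≤ ‖g k‖ := by
    rw [norm_div]; exact div_le_self (norm_nonneg _) hp1.le
  linarith [hb k, hb (k + 1)]

lemma green_limit {μ : Measure ℝ} [IsFiniteMeasure μ] (hK : IsCompact (msupp μ))
    {l : ℕ → Polynomial ℝ} {a b : ℕ → ℝ} (hM : IsM01 μ l a b) {z : ℂ} (hz : z ∉ msuppC μ)
    {p : ℂ} (hp : p + p⁻¹ = 2 * z) (hp1 : 1 < ‖p‖) :
    Tendsto (fun n => green μ l z n n) atTop (𝓝 (p⁻¹ - z)⁻¹) ∧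
    Tendsto (fun n => green μ l z n (n + 1)) atTop (𝓝 ((p⁻¹ - z)⁻¹ / p)) := by
  obtain ⟨M, hMb⟩ := green_bound hK hM.onp hz
  have haC : ∀ {i : ℕ → ℕ} , Tendsto i atTop atTop →
      Tendsto (fun n => (a (i n) : ℂ)) atTop (𝓝 (1 / 2)) := by
    intro i hi
    have := (Complex.continuous_ofReal.tendsto _).comp (hM.tendsto_a.comp hi)
    simpa [Function.comp_def] using this
  have hbC : ∀ {i : ℕ → ℕ} , Tendsto i atTop atTop →
      Tendsto (fun n => (b (i n) : ℂ)) atTop (𝓝 0) := by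
    intro i hi
    have := (Complex.continuous_ofReal.tendsto _).comp (hM.tendsto_b.comp hi)
    simpa [Function.comp_def] using this
  have key : ∀ 𝒰 : Ultrafilter ℕ, (𝒰 : Filter ℕ) ≤ atTop →
      Tendsto (fun n => green μ l z n n) 𝒰 (𝓝 (p⁻¹ - z)⁻¹) ∧
      Tendsto (fun n => green μ l z n (n + 1)) 𝒰 (𝓝 ((p⁻¹ - z)⁻¹ / p)) := by
    intro 𝒰 h𝒰
    have hex : ∀ i j : ℕ → ℕ, ∃ w : ℂ, ‖w‖ ≤ M ∧
        Tendsto (fun n => green μ l z (i n) (j n)) 𝒰 (𝓝 w) := by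
      intro i j
      have hc : IsCompact (Metric.closedBall (0 : ℂ) M) := isCompact_closedBall _ _
      obtain ⟨w, hw, hw2⟩ := hc.ultrafilter_le_nhds
        (𝒰.map (fun n => green μ l z (i n) (j n))) (by
          rw [Filter.le_principal_iff, Ultrafilter.coe_map]
          exact Filter.mem_map.2 (Filter.univ_mem' (fun n => by simpa using hMb _ _)))
      exact ⟨w, by simpa using hw, hw2⟩
    choose R hRb hR using fun k : ℕ => hex (fun n => n + k) (fun n => n)
    choose S hSb hS using fun k : ℕ => hex (fun n => n - k) (fun n => n)
    have hR0 : S 0 = R 0 := tendsto_nhds_unique (hS 0) (hR 0)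
    have hRr : ∀ k, R (k + 2) + R k = 2 * z * R (k + 1) := by
      intro k
      have h1 := (((haC (tendsto_add_atTop_nat (k + 2))).mono_left h𝒰).mul (hR (k + 2))).add
        (((hbC (tendsto_add_atTop_nat (k + 1))).mono_left h𝒰).mul (hR (k + 1))) |>.add
        (((haC (tendsto_add_atTop_nat (k + 1))).mono_left h𝒰).mul (hR k))
      have h2 := (hR (k + 1)).const_mul z
      have e := tendsto_nhds_unique (h1.congr (fun n => by
        have := green_rec hK hM hz (n + k) n
        rw [if_neg (by omega), zero_add] at this
        exact this)) h2
      linear_combination 2 * e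
    have hSr : ∀ k, S (k + 2) + S k = 2 * z * S (k + 1) := by
      intro k
      have h1 := (((haC (tendsto_sub_atTop_nat k)).mono_left h𝒰).mul (hS k)).add
        (((hbC (tendsto_sub_atTop_nat (k + 1))).mono_left h𝒰).mul (hS (k + 1))) |>.add
        (((haC (tendsto_sub_atTop_nat (k + 1))).mono_left h𝒰).mul (hS (k + 2)))
      have h2 := (hS (k + 1)).const_mul z
      have e := tendsto_nhds_unique (h1.congr' (by
        filter_upwards [h𝒰 (eventually_ge_atTop (k + 2))] with n hn
        have := green_rec hK hM hz (n - (k + 2)) n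
        rw [if_neg (by omega), zero_add] at this
        have e1 : n - (k + 2) + 2 = n - k := by omega
        have e2 : n - (k + 2) + 1 = n - (k + 1) := by omega
        rw [e1, e2] at this
        exact this)) h2
      linear_combination 2 * e
    have hR1 := bounded_rec hp hp1 hRb hRr
    have hS1 := bounded_rec hp hp1 hSb hSr
    have hcen : (R 1 + S 1) / 2 = 1 + z * R 0 := by
      have h1 := (((haC (tendsto_add_atTop_nat 1)).mono_left h𝒰).mul (hR 1)).add
        (((hbC tendsto_id).mono_left h𝒰).mul (hR 0)) |>.add
        (((haC tendsto_id).mono_left h𝒰).mul (hS 1))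
      have h2 := ((hR 0).const_mul z).const_add 1
      have e := tendsto_nhds_unique (h1.congr' (by
        filter_upwards [h𝒰 (eventually_ge_atTop 1)] with n hn
        obtain ⟨m, rfl⟩ : ∃ m, n = m + 1 := ⟨n - 1, by omega⟩
        have := green_rec hK hM hz m (m + 1)
        rw [if_pos rfl] at this
        exact this)) h2
      linear_combination e
    have hval : R 0 = (p⁻¹ - z)⁻¹ := by
      apply eq_inv_of_mul_eq_one_left
      rw [hR1, hS1, hR0] at hcen
      linear_combination hcen
    have hRR : Tendsto (fun n => green μ l z n (n + 1)) 𝒰 (𝓝 (R 1)) :=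
      (hR 1).congr (fun n => green_symm _ _ _ _ _)
    rw [← hval, ← hR1]
    exact ⟨hR 0, hRR⟩
  exact ⟨(tendsto_iff_ultrafilter _ _ _).2 fun g hg => (key g hg).1,
    (tendsto_iff_ultrafilter _ _ _).2 fun g hg => (key g hg).2⟩

lemma Icc_subset_msupp {μ : Measure ℝ} [IsFiniteMeasure μ] (hK : IsCompact (msupp μ))
    {l : ℕ → Polynomial ℝ} {a b : ℕ → ℝ} (hM : IsM01 μ l a b) : Icc (-1 : ℝ) 1 ⊆ msupp μ := by
  intro x hx
  by_contra hxs
  have hxC : (x : ℂ) ∉ msuppC μ := by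
    rintro ⟨y, hy, hyx⟩
    exact hxs (by rwa [← Complex.ofReal_inj.1 hyx])
  obtain ⟨δ, hδ, M, hlip⟩ := green_lip hK hM.onp hxC
  obtain ⟨N, hN⟩ := green_bound hK hM.onp hxC
  -- the real values at `x`
  have hreal : ∀ n, ∃ t : ℝ, green μ l x n n = t := by
    intro n
    refine ⟨∫ y, (l n).eval y * (l n).eval y * (y - x)⁻¹ ∂μ, ?_⟩
    unfold green
    simp_rw [lC_eval]
    rw [← integral_complex_ofReal]
    congr 1; ext y; push_cast; rfl
  choose t ht using hreal
  have htb : ∀ n, |t n| ≤ N := by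
    intro n
    have := hN n n
    rwa [ht, Complex.norm_real, Real.norm_eq_abs] at this
  obtain ⟨T, -, hT⟩ := (isCompact_Icc (a := -N) (b := N)).ultrafilter_le_nhds
    ((Filter.hyperfilter ℕ).map t) (by
      rw [Filter.le_principal_iff, Ultrafilter.coe_map]
      exact Filter.mem_map.2 (Filter.univ_mem' (fun n => abs_le.1 (htb n))))
  have hT' : Tendsto t (Filter.hyperfilter ℕ) (𝓝 T) := hT
  have hTC : Tendsto (fun n => green μ l x n n) (Filter.hyperfilter ℕ) (𝓝 (T : ℂ)) := by
    simp_rw [ht]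
    exact (Complex.continuous_ofReal.tendsto _).comp hT'
  set y : ℝ → ℂ := fun η => (x : ℂ) + η * Complex.I with hy
  set g : ℝ → ℂ := fun η => ((phi (y η))⁻¹ - y η)⁻¹ with hg
  have hyx : ∀ η : ℝ, 0 < η → ‖y η - x‖ = η := by
    intro η h1
    simp [hy, abs_of_pos h1]
  have hfacts : ∀ η : ℝ, 0 < η → η < δ → ‖g η - T‖ ≤ M * η ∧ g η ^ 2 * (y η ^ 2 - 1) = 1 := by
    intro η h1 h2
    have hyb : y η ∈ Metric.ball (x : ℂ) δ := by
      rw [Metric.mem_ball, dist_eq_norm, hyx η h1]; exact h2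
    obtain ⟨hyn, hL⟩ := hlip _ hyb
    obtain ⟨hp, hp1, -⟩ := phi_facts (y η) (by
      intro x' _ he
      have := congrArg Complex.im he
      simp [hy] at this
      linarith)
    have hlim := (green_limit hK hM hyn hp hp1).1.mono_left
      (Nat.hyperfilter_le_atTop)
    constructor
    · refine le_of_tendsto (hlim.sub hTC).norm (Filter.Eventually.of_forall fun n => ?_)
      have := hL n n
      rwa [hyx η h1] at this
    · have hp0 : phi (y η) ≠ 0 := by intro h; rw [h, norm_zero] at hp1; linarith
      have hsq : ((phi (y η))⁻¹ - y η) ^ 2 = y η ^ 2 - 1 := by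
        have : (phi (y η)) * (phi (y η))⁻¹ = 1 := mul_inv_cancel₀ hp0
        linear_combination ((phi (y η))⁻¹) * hp - this
      have hne : (phi (y η))⁻¹ - y η ≠ 0 := by
        intro h0
        have h5 : phi (y η) = (phi (y η))⁻¹ := by linear_combination hp - 2 * h0
        have h6 : ‖phi (y η)‖ * ‖phi (y η)‖ = 1 := by
          rw [← norm_mul]; nth_rewrite 2 [h5]; rw [mul_inv_cancel₀ hp0, norm_one]
        nlinarith
      rw [← hsq]
      simp only [hg]
      rw [← mul_pow, inv_mul_cancel₀ hne, one_pow]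
  have hη : ∀ᶠ η : ℝ in 𝓝[>] 0, 0 < η ∧ η < δ := Ioo_mem_nhdsGT hδ
  have hgl : Tendsto g (𝓝[>] 0) (𝓝 (T : ℂ)) := by
    rw [tendsto_iff_norm_sub_tendsto_zero]
    refine squeeze_zero' (Filter.Eventually.of_forall fun _ => norm_nonneg _)
      (g := fun η => M * η) ?_ ?_
    · filter_upwards [hη] with η h using (hfacts η h.1 h.2).1
    · have : Tendsto (fun η : ℝ => M * η) (𝓝 0) (𝓝 (M * 0)) := tendsto_id.const_mul M
      rw [mul_zero] at this
      exact this.mono_left nhdsWithin_le_nhds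
  have hyl : Tendsto y (𝓝[>] 0) (𝓝 (x : ℂ)) := by
    have : Continuous y := by fun_prop
    have h0 := this.tendsto 0
    simp only [hy, Complex.ofReal_zero, zero_mul, add_zero] at h0
    exact h0.mono_left nhdsWithin_le_nhds
  have hfin := tendsto_nhds_unique_of_eventuallyEq
    ((hgl.pow 2).mul ((hyl.pow 2).sub_const 1)) (tendsto_const_nhds (x := (1 : ℂ)))
    (by filter_upwards [hη] with η h using (hfacts η h.1 h.2).2)
  have hfin2 : T ^ 2 * (x ^ 2 - 1) = 1 := by exact_mod_cast hfin
  nlinarith [sq_nonneg T, hx.1, hx.2, mul_nonneg (sq_nonneg T) (mul_nonneg (sub_nonneg.2 hx.2) (by linarith [hx.1] : 0 ≤ x + 1))]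

/-! ### The inductive invariant -/

/-- Stieltjes transform of `p w dμ`. -/
noncomputable def stj (μ : Measure ℝ) (w : ℝ → ℂ) (p : Polynomial ℂ) (z : ℂ) : ℂ :=
  ∫ x : ℝ, p.eval (x : ℂ) * w x * ((x : ℂ) - z)⁻¹ ∂μ

/-- The polynomial `P` is monic of degree `n` and orthogonal to lower degrees. -/
def IsOP (μ : Measure ℝ) (w : ℝ → ℂ) (n : ℕ) (P : Polynomial ℂ) : Prop :=
  P.Monic ∧ P.natDegree = n ∧
    ∀ p : Polynomial ℂ, p.degree < n → ∫ x : ℝ, p.eval (x : ℂ) * P.eval (x : ℂ) * w x ∂μ = 0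

/-- Eventually existing orthogonal polynomials with ratio asymptotics. -/
structure RatioInv (μ : Measure ℝ) (l : ℕ → Polynomial ℝ) (w : ℝ → ℂ) (K : ℂ)
    (P : ℕ → Polynomial ℂ) : Prop where
  cont : ContinuousOn w (msupp μ)
  op : ∀ᶠ n in atTop, IsOP μ w n (P n)
  ratioP : ∀ z ∉ msuppC μ, Tendsto (fun p : ℕ × ℂ => (P (p.1 + 1)).eval p.2 / (P p.1).eval p.2)
    (atTop ×ˢ 𝓝 z) (𝓝 (phi z / 2))
  ratioQ : ∀ z ∉ msuppC μ, Tendsto (fun p : ℕ × ℂ => stj μ w (P (p.1 + 1)) p.2 /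
    stj μ w (P p.1) p.2) (atTop ×ˢ 𝓝 z) (𝓝 (1 / (2 * phi z)))
  norm : Tendsto (fun n => (∫ x : ℝ, (P n).eval (x : ℂ) * (P n).eval (x : ℂ) * w x ∂μ) *
    ((l n).leadingCoeff : ℂ) ^ 2) atTop (𝓝 K)

lemma lC_natDegree {μ : Measure ℝ} {l : ℕ → Polynomial ℝ} (ho : IsOrthonormalPolys μ l) (n : ℕ) :
    (lC l n).natDegree = n := by
  rw [lC, Polynomial.natDegree_map]; exact ho.natDegree_eq n

lemma lC_leadingCoeff (l : ℕ → Polynomial ℝ) (n : ℕ) :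
    (lC l n).leadingCoeff = ((l n).leadingCoeff : ℂ) := by
  rw [lC, Polynomial.leadingCoeff_map]; rfl

lemma tau_ne {μ : Measure ℝ} {l : ℕ → Polynomial ℝ} (ho : IsOrthonormalPolys μ l) (n : ℕ) :
    ((l n).leadingCoeff : ℂ) ≠ 0 := by
  exact_mod_cast (ho.leadingCoeff_pos n).ne'

lemma lC_orth_low {μ : Measure ℝ} [IsFiniteMeasure μ] (hK : IsCompact (msupp μ))
    {l : ℕ → Polynomial ℝ} (ho : IsOrthonormalPolys μ l) (m : ℕ) :
    ∀ k ≤ m, ∀ p : Polynomial ℂ, p.degree < k →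
      ∫ x : ℝ, p.eval (x : ℂ) * (lC l m).eval (x : ℂ) ∂μ = 0 := by
  intro k
  induction k with
  | zero =>
    intro _ p hp
    have : p = 0 := by
      rw [← Polynomial.degree_eq_bot]
      simpa using hp
    simp [this]
  | succ k ih =>
    intro hk p hp
    set c : ℂ := p.coeff k / ((l k).leadingCoeff : ℂ) with hc
    set q : Polynomial ℂ := p - Polynomial.C c * lC l k with hq
    have hqd : q.degree < k := by
      rw [Polynomial.degree_lt_iff_coeff_zero]
      intro j hj
      rw [hq, Polynomial.coeff_sub, Polynomial.coeff_C_mul]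
      rcases Nat.eq_or_lt_of_le hj with h | h
      · subst h
        have : (lC l k).coeff k = ((l k).leadingCoeff : ℂ) := by
          rw [← lC_leadingCoeff, Polynomial.leadingCoeff, lC_natDegree ho]
        rw [this, hc, div_mul_cancel₀ _ (tau_ne ho k), sub_self]
      · have h1 : p.coeff j = 0 := (Polynomial.degree_lt_iff_coeff_zero _ _).1 hp j h
        have h2 : (lC l k).coeff j = 0 :=
          Polynomial.coeff_eq_zero_of_natDegree_lt (by rw [lC_natDegree ho]; exact h)
        rw [h1, h2]; simp
    have hi1 : Integrable (fun x : ℝ => q.eval (x : ℂ) * (lC l m).eval (x : ℂ)) μ :=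
      integ hK ((cont_poly _ _).mul (cont_poly _ _))
    have hi2 : Integrable (fun x : ℝ => (lC l k).eval (x : ℂ) * (lC l m).eval (x : ℂ)) μ :=
      integ hK ((cont_poly _ _).mul (cont_poly _ _))
    have e : ∀ x : ℝ, p.eval (x : ℂ) * (lC l m).eval (x : ℂ) =
        q.eval (x : ℂ) * (lC l m).eval (x : ℂ) +
        c * ((lC l k).eval (x : ℂ) * (lC l m).eval (x : ℂ)) := by
      intro x; simp [hq]; ring
    simp_rw [e]
    rw [integral_add hi1 (hi2.const_mul _), integral_const_mul, ih (by omega) q hqd,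
      lC_orth ho, if_neg (by omega)]
    simp

lemma green_factor {μ : Measure ℝ} [IsFiniteMeasure μ] (hK : IsCompact (msupp μ))
    {l : ℕ → Polynomial ℝ} (ho : IsOrthonormalPolys μ l) {z : ℂ} (hz : z ∉ msuppC μ)
    {n m : ℕ} (hnm : n ≤ m) :
    green μ l z n m = (lC l n).eval z * stj μ (fun _ => 1) (lC l m) z := by
  set q : Polynomial ℂ := (lC l n - Polynomial.C ((lC l n).eval z)) /ₘ (Polynomial.X - Polynomial.C z)
    with hq
  have hmul : (Polynomial.X - Polynomial.C z) * q = lC l n - Polynomial.C ((lC l n).eval z) := by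
    rw [hq, Polynomial.mul_divByMonic_eq_iff_isRoot]; simp
  have hqd : q.degree < m := by
    by_cases hq0 : q = 0
    · rw [hq0, Polynomial.degree_zero]; exact WithBot.bot_lt_coe m
    rw [← Polynomial.natDegree_lt_iff_degree_lt hq0]
    have h1 := congrArg Polynomial.natDegree hmul
    rw [Polynomial.natDegree_mul (Polynomial.X_sub_C_ne_zero z) hq0, Polynomial.natDegree_X_sub_C,
      Polynomial.natDegree_sub_C, lC_natDegree ho] at h1
    omega
  have h0 := lC_orth_low hK ho m m le_rfl q hqd
  have hi1 : Integrable (fun x : ℝ => q.eval (x : ℂ) * (lC l m).eval (x : ℂ)) μ :=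
    integ hK ((cont_poly _ _).mul (cont_poly _ _))
  have hi2 : Integrable (fun x : ℝ => (lC l m).eval (x : ℂ) * 1 * ((x : ℂ) - z)⁻¹) μ :=
    integ hK (((cont_poly _ _).mul continuousOn_const).mul (cont_cauchy hz))
  have e : green μ l z n m = ∫ x : ℝ, (q.eval (x : ℂ) * (lC l m).eval (x : ℂ) +
      (lC l n).eval z * ((lC l m).eval (x : ℂ) * 1 * ((x : ℂ) - z)⁻¹)) ∂μ := by
    apply integral_congr_ae
    filter_upwards [ae_msupp μ] with x hx
    have hne := sub_ne hz hx
    have h1 := congrArg (Polynomial.eval (x : ℂ)) hmul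
    simp only [Polynomial.eval_mul, Polynomial.eval_sub, Polynomial.eval_X, Polynomial.eval_C] at h1
    field_simp
    linear_combination (-(lC l m).eval (x : ℂ)) * h1
  rw [e, integral_add hi1 (hi2.const_mul _), h0, integral_const_mul, zero_add]
  rfl

lemma pt_to_unif {F : ℂ → ℕ → ℂ} {z w : ℂ} {δ M : ℝ} (hδ : 0 < δ)
    (hlip : ∀ y ∈ Metric.ball z δ, ∀ n, ‖F y n - F z n‖ ≤ M * ‖y - z‖)
    (h : Tendsto (fun n => F z n) atTop (𝓝 w)) :
    Tendsto (fun p : ℕ × ℂ => F p.2 p.1) (atTop ×ˢ 𝓝 z) (𝓝 w) := by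
  have h1 : Tendsto (fun p : ℕ × ℂ => F z p.1) (atTop ×ˢ 𝓝 z) (𝓝 w) := h.comp tendsto_fst
  have h2 : Tendsto (fun p : ℕ × ℂ => F p.2 p.1 - F z p.1) (atTop ×ˢ 𝓝 z) (𝓝 0) := by
    rw [tendsto_zero_iff_norm_tendsto_zero]
    refine squeeze_zero' (Filter.Eventually.of_forall fun _ => norm_nonneg _)
      (g := fun p : ℕ × ℂ => M * ‖p.2 - z‖) ?_ ?_
    · have : ∀ᶠ p : ℕ × ℂ in atTop ×ˢ 𝓝 z, p.2 ∈ Metric.ball z δ :=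
        tendsto_snd.eventually (Metric.ball_mem_nhds z hδ)
      filter_upwards [this] with p hp using hlip _ hp _
    · have : Tendsto (fun y : ℂ => M * ‖y - z‖) (𝓝 z) (𝓝 (M * ‖z - z‖)) :=
        (by fun_prop : Continuous fun y : ℂ => M * ‖y - z‖).tendsto z
      rw [sub_self, norm_zero, mul_zero] at this
      exact this.comp tendsto_snd
  simpa using h2.add h1

lemma tau_ratio {μ : Measure ℝ} {l : ℕ → Polynomial ℝ} {a b : ℕ → ℝ} (hM : IsM01 μ l a b) :
    Tendsto (fun n => ((l n).leadingCoeff : ℂ) / ((l (n + 1)).leadingCoeff : ℂ)) atTop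
      (𝓝 (1 / 2)) := by
  have h1 : ∀ n, (l n).leadingCoeff = a (n + 1) * (l (n + 1)).leadingCoeff := by
    have hcl : ∀ k, (l k).coeff k = (l k).leadingCoeff := fun k => by
      rw [Polynomial.leadingCoeff, hM.onp.natDegree_eq]
    have hz : ∀ k j, k < j → (l k).coeff j = 0 := fun k j h =>
      Polynomial.coeff_eq_zero_of_natDegree_lt (by rw [hM.onp.natDegree_eq]; exact h)
    intro n
    cases n with
    | zero =>
      have := congrArg (fun p => Polynomial.coeff p 1) hM.recurrence_zero
      simp only [Polynomial.coeff_X_mul, Polynomial.coeff_add, Polynomial.coeff_smul,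
        smul_eq_mul] at this
      rw [hz 0 1 (by omega), hcl, hcl] at this
      simpa using this
    | succ n =>
      have := congrArg (fun p => Polynomial.coeff p (n + 2)) (hM.recurrence n)
      simp only [Polynomial.coeff_X_mul, Polynomial.coeff_add, Polynomial.coeff_smul,
        smul_eq_mul] at this
      rw [hz (n + 1) (n + 2) (by omega), hz n (n + 2) (by omega), hcl, hcl] at this
      simpa using this
  have h2 : Tendsto (fun n => ((a (n + 1) : ℝ) : ℂ)) atTop (𝓝 (1 / 2)) := by
    have := (Complex.continuous_ofReal.tendsto _).comp
      (hM.tendsto_a.comp (tendsto_add_atTop_nat 1))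
    simpa [Function.comp_def] using this
  refine h2.congr fun n => ?_
  have h3 := tau_ne hM.onp (n + 1)
  rw [h1 n]; push_cast
  field_simp

lemma phi_facts' {μ : Measure ℝ} [IsFiniteMeasure μ] (hK : IsCompact (msupp μ))
    {l : ℕ → Polynomial ℝ} {a b : ℕ → ℝ} (hM : IsM01 μ l a b) {z : ℂ} (hz : z ∉ msuppC μ) :
    phi z + (phi z)⁻¹ = 2 * z ∧ 1 < ‖phi z‖ ∧ ContinuousAt phi z :=
  phi_facts z fun x hx he => hz ⟨x, Icc_subset_msupp hK hM hx, he.symm⟩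

lemma phi_ne {z : ℂ} (h : 1 < ‖phi z‖) : phi z ≠ 0 := by
  intro h0; rw [h0, norm_zero] at h; linarith

lemma phi_prod_ne {y z : ℂ} (h : 1 < ‖phi z‖) (h' : 1 < ‖phi y‖) : phi y * phi z - 1 ≠ 0 := by
  intro h0
  have := congrArg norm (sub_eq_zero.1 h0)
  rw [norm_mul, norm_one] at this
  nlinarith

lemma base_inv {μ : Measure ℝ} [IsFiniteMeasure μ] (hK : IsCompact (msupp μ))
    {l : ℕ → Polynomial ℝ} {a b : ℕ → ℝ} (hM : IsM01 μ l a b) :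
    RatioInv μ l (fun _ => 1) 1
      (fun n => Polynomial.C (((l n).leadingCoeff : ℂ)⁻¹) * lC l n) := by
  have ho := hM.onp
  have hev : ∀ n z, (Polynomial.C (((l n).leadingCoeff : ℂ)⁻¹) * lC l n).eval z =
      ((l n).leadingCoeff : ℂ)⁻¹ * (lC l n).eval z := by intro n z; simp
  have hst : ∀ n z, stj μ (fun _ => 1) (Polynomial.C (((l n).leadingCoeff : ℂ)⁻¹) * lC l n) z =
      ((l n).leadingCoeff : ℂ)⁻¹ * stj μ (fun _ => 1) (lC l n) z := by
    intro n z
    unfold stj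
    rw [← integral_const_mul]
    congr 1; ext x; rw [hev]; ring
  have hgr : ∀ z ∉ msuppC μ,
      (phi z)⁻¹ - z ≠ 0 ∧
      Tendsto (fun p : ℕ × ℂ => green μ l p.2 p.1 p.1) (atTop ×ˢ 𝓝 z)
        (𝓝 ((phi z)⁻¹ - z)⁻¹) ∧
      Tendsto (fun p : ℕ × ℂ => green μ l p.2 p.1 (p.1 + 1)) (atTop ×ˢ 𝓝 z)
        (𝓝 (((phi z)⁻¹ - z)⁻¹ / phi z)) := by
    intro z hz
    obtain ⟨hp, hp1, -⟩ := phi_facts' hK hM hz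
    obtain ⟨δ, hδ, M, hlip⟩ := green_lip hK ho hz
    obtain ⟨h1, h2⟩ := green_limit hK hM hz hp hp1
    refine ⟨?_, pt_to_unif (F := fun y n => green μ l y n n) hδ
      (fun y hy n => (hlip y hy).2 _ _) h1,
      pt_to_unif (F := fun y n => green μ l y n (n + 1)) hδ (fun y hy n => (hlip y hy).2 _ _) h2⟩
    intro h0
    have h5 : phi z = (phi z)⁻¹ := by linear_combination hp - 2 * h0
    apply phi_prod_ne hp1 hp1
    nth_rewrite 2 [h5]
    rw [mul_inv_cancel₀ (phi_ne hp1), sub_self]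
  have hU : ∀ z ∉ msuppC μ, ∀ᶠ p : ℕ × ℂ in atTop ×ˢ 𝓝 z, p.2 ∉ msuppC μ := fun z hz =>
    tendsto_snd.eventually ((msuppC_closed hK).isOpen_compl.mem_nhds hz)
  refine ⟨continuousOn_const, Filter.Eventually.of_forall fun n => ⟨?_, ?_, ?_⟩, ?_, ?_, ?_⟩
  · rw [Polynomial.Monic, Polynomial.leadingCoeff_mul, Polynomial.leadingCoeff_C, lC_leadingCoeff,
      inv_mul_cancel₀ (tau_ne ho n)]
  · rw [Polynomial.natDegree_C_mul (inv_ne_zero (tau_ne ho n)), lC_natDegree ho]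
  · intro p hp
    have h0 := lC_orth_low hK ho n n le_rfl p hp
    have e : ∀ x : ℝ, p.eval (x : ℂ) * (Polynomial.C (((l n).leadingCoeff : ℂ)⁻¹) * lC l n).eval
        (x : ℂ) * 1 = ((l n).leadingCoeff : ℂ)⁻¹ * (p.eval (x : ℂ) * (lC l n).eval (x : ℂ)) := by
      intro x; rw [hev]; ring
    simp_rw [e]
    rw [integral_const_mul, h0, mul_zero]
  · intro z hz
    obtain ⟨hp, hp1, -⟩ := phi_facts' hK hM hz
    have hp0 := phi_ne hp1
    obtain ⟨hg, h1, h2⟩ := hgr z hz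
    have h3 := shift_up (F := fun n y => green μ l y n n) h1
    have h4 := (h3.div h2 (div_ne_zero (inv_ne_zero hg) hp0)).mul ((tau_ratio hM).comp tendsto_fst)
    have e : ((phi z)⁻¹ - z)⁻¹ / (((phi z)⁻¹ - z)⁻¹ / phi z) * (1 / 2) = phi z / 2 := by
      have := inv_ne_zero hg
      generalize ((phi z)⁻¹ - z)⁻¹ = g at this ⊢
      field_simp
    rw [e] at h4
    refine h4.congr' ?_
    filter_upwards [hU z hz, h3.eventually_ne (inv_ne_zero hg),
      h2.eventually_ne (div_ne_zero (inv_ne_zero hg) hp0)] with p hp h5 h6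
    simp only [Pi.div_apply, Function.comp]
    rw [green_factor hK ho hp le_rfl] at h5 ⊢
    rw [green_factor hK ho hp (by omega)] at h6 ⊢
    rw [hev, hev]
    have t1 := tau_ne ho p.1
    have t2 := tau_ne ho (p.1 + 1)
    have := left_ne_zero_of_mul h5
    have := right_ne_zero_of_mul h5
    have := left_ne_zero_of_mul h6
    field_simp
  · intro z hz
    obtain ⟨hp, hp1, -⟩ := phi_facts' hK hM hz
    have hp0 := phi_ne hp1
    obtain ⟨hg, h1, h2⟩ := hgr z hz
    have h4 := (h2.div h1 (inv_ne_zero hg)).mul ((tau_ratio hM).comp tendsto_fst)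
    have e : ((phi z)⁻¹ - z)⁻¹ / phi z / ((phi z)⁻¹ - z)⁻¹ * (1 / 2) = 1 / (2 * phi z) := by
      have := inv_ne_zero hg
      generalize ((phi z)⁻¹ - z)⁻¹ = g at this ⊢
      field_simp
    rw [e] at h4
    refine h4.congr' ?_
    filter_upwards [hU z hz, h1.eventually_ne (inv_ne_zero hg)] with p hp h5
    simp only [Pi.div_apply, Function.comp]
    rw [green_factor hK ho hp le_rfl] at h5 ⊢
    rw [green_factor hK ho hp (by omega)]
    rw [hst, hst]
    have t1 := tau_ne ho p.1
    have t2 := tau_ne ho (p.1 + 1)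
    have := left_ne_zero_of_mul h5
    have := right_ne_zero_of_mul h5
    field_simp
  · refine tendsto_const_nhds.congr fun n => ?_
    have t1 := tau_ne ho n
    have e : ∀ x : ℝ, (Polynomial.C (((l n).leadingCoeff : ℂ)⁻¹) * lC l n).eval (x : ℂ) *
        (Polynomial.C (((l n).leadingCoeff : ℂ)⁻¹) * lC l n).eval (x : ℂ) * 1 =
        (((l n).leadingCoeff : ℂ) ^ 2)⁻¹ * ((lC l n).eval (x : ℂ) * (lC l n).eval (x : ℂ)) := by
      intro x; rw [hev]; field_simp
    simp_rw [e]
    rw [integral_const_mul, lC_orth ho, if_pos rfl]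
    field_simp

/-! ### The two steps -/

lemma int_lin {μ : Measure ℝ} [IsFiniteMeasure μ] (hK : IsCompact (msupp μ)) {f g : ℝ → ℂ}
    (hf : ContinuousOn f (msupp μ)) (hg : ContinuousOn g (msupp μ)) (s : ℂ) :
    ∫ x, (f x - s * g x) ∂μ = ∫ x, f x ∂μ - s * ∫ x, g x ∂μ := by
  rw [integral_sub (integ hK hf) ((integ hK hg).const_mul s), integral_const_mul]

lemma stj_lin {μ : Measure ℝ} [IsFiniteMeasure μ] (hK : IsCompact (msupp μ)) {w : ℝ → ℂ}
    (hw : ContinuousOn w (msupp μ)) (p q : Polynomial ℂ) (s : ℂ) {z : ℂ} (hz : z ∉ msuppC μ) :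
    stj μ w (p - Polynomial.C s * q) z = stj μ w p z - s * stj μ w q z := by
  unfold stj
  have h := int_lin hK (((cont_poly _ p).mul hw).mul (cont_cauchy hz))
    (((cont_poly _ q).mul hw).mul (cont_cauchy hz)) s
  simp only [Pi.mul_apply] at h
  rw [← h]
  congr 1; ext x; simp; ring

lemma orth_lin {μ : Measure ℝ} [IsFiniteMeasure μ] (hK : IsCompact (msupp μ)) {w : ℝ → ℂ}
    (hw : ContinuousOn w (msupp μ)) (r p q : Polynomial ℂ) (s : ℂ) :
    ∫ x : ℝ, r.eval (x : ℂ) * (p - Polynomial.C s * q).eval (x : ℂ) * w x ∂μ =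
    ∫ x : ℝ, r.eval (x : ℂ) * p.eval (x : ℂ) * w x ∂μ -
    s * ∫ x : ℝ, r.eval (x : ℂ) * q.eval (x : ℂ) * w x ∂μ := by
  have h := int_lin hK (((cont_poly _ r).mul (cont_poly _ p)).mul hw)
    (((cont_poly _ r).mul (cont_poly _ q)).mul hw) s
  simp only [Pi.mul_apply] at h
  rw [← h]
  congr 1; ext x; simp; ring

lemma ev_shift {p : ℕ → Prop} (h : ∀ᶠ n in atTop, p (n + 1)) : ∀ᶠ n in atTop, p n := by
  rw [← map_add_atTop_eq_nat 1]; exact Filter.eventually_map.2 h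

lemma monic_step {p q : Polynomial ℂ} {n : ℕ} (hp : p.Monic) (hpn : p.natDegree = n + 1)
    (hqn : q.natDegree = n) (s : ℂ) :
    (p - Polynomial.C s * q).Monic ∧ (p - Polynomial.C s * q).natDegree = n + 1 := by
  have hlt : (Polynomial.C s * q).degree < p.degree := by
    rw [Polynomial.degree_eq_natDegree hp.ne_zero, hpn]
    refine lt_of_le_of_lt Polynomial.degree_le_natDegree ?_
    have := Polynomial.natDegree_C_mul_le s q
    exact_mod_cast (by omega : (Polynomial.C s * q).natDegree < n + 1)
  refine ⟨hp.sub_of_left hlt, ?_⟩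
  rw [Polynomial.natDegree_sub_eq_left_of_natDegree_lt, hpn]
  have := Polynomial.natDegree_C_mul_le s q
  omega

lemma mult_step {μ : Measure ℝ} [IsFiniteMeasure μ] (hK : IsCompact (msupp μ))
    {l : ℕ → Polynomial ℝ} {a b : ℕ → ℝ} (hM : IsM01 μ l a b) {c : ℂ} (hc : c ∉ msuppC μ)
    {w : ℝ → ℂ} {K : ℂ} (h : ∃ P, RatioInv μ l w K P) :
    ∃ P, RatioInv μ l (fun x => w x * ((x : ℂ) - c)) (K * (-(phi c / 2))) P := by
  obtain ⟨P, hP⟩ := h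
  set ρ : ℕ → ℂ := fun n => (P (n + 1)).eval c / (P n).eval c with hρ
  set R : ℕ → Polynomial ℂ := fun n =>
    (P (n + 1) - Polynomial.C (ρ n) * P n) /ₘ (Polynomial.X - Polynomial.C c) with hR
  obtain ⟨hpc, hpc1, hcc⟩ := phi_facts' hK hM hc
  have hpc0 := phi_ne hpc1
  have hρl : Tendsto ρ atTop (𝓝 (phi c / 2)) :=
    at_point (F := fun n y => (P (n + 1)).eval y / (P n).eval y) (hP.ratioP c hc)
  have hmul : ∀ᶠ n in atTop, (Polynomial.X - Polynomial.C c) * R n =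
      P (n + 1) - Polynomial.C (ρ n) * P n := by
    filter_upwards [hρl.eventually_ne (div_ne_zero hpc0 two_ne_zero)] with n hn
    have hne : (P n).eval c ≠ 0 := fun h0 => hn (by simp [hρ, h0])
    rw [hR, Polynomial.mul_divByMonic_eq_iff_isRoot]
    simp [hρ, hne]
  have hmulev : ∀ᶠ n in atTop, ∀ z, (z - c) * (R n).eval z =
      (P (n + 1)).eval z - ρ n * (P n).eval z := by
    filter_upwards [hmul] with n hn z
    have := congrArg (Polynomial.eval z) hn
    simpa using this
  have hw' : ContinuousOn (fun x : ℝ => w x * ((x : ℂ) - c)) (msupp μ) :=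
    hP.cont.mul (by fun_prop)
  have hop1 : ∀ᶠ n in atTop, IsOP μ w (n + 1) (P (n + 1)) :=
    (tendsto_add_atTop_nat 1).eventually hP.op
  have hUo : IsOpen (msuppC μ)ᶜ := (msuppC_closed hK).isOpen_compl
  refine ⟨R, hw', ?_, ?_, ?_, ?_⟩
  · filter_upwards [hmul, hmulev, hP.op, hop1] with n hn hnev hO hO1
    obtain ⟨hm, hd⟩ := monic_step hO1.1 hO1.2.1 hO.2.1 (ρ n)
    rw [← hn] at hm hd
    have hRm : (R n).Monic := (Polynomial.monic_X_sub_C c).of_mul_monic_left hm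
    refine ⟨hRm, ?_, ?_⟩
    · rw [Polynomial.natDegree_mul (Polynomial.X_sub_C_ne_zero c) hRm.ne_zero,
        Polynomial.natDegree_X_sub_C] at hd
      omega
    · intro p hp
      have e : ∀ x : ℝ, p.eval (x : ℂ) * (R n).eval (x : ℂ) * (w x * ((x : ℂ) - c)) =
          p.eval (x : ℂ) * (P (n + 1) - Polynomial.C (ρ n) * P n).eval (x : ℂ) * w x := by
        intro x
        have := hnev x
        simp only [Polynomial.eval_sub, Polynomial.eval_mul, Polynomial.eval_C]
        linear_combination (p.eval (x : ℂ) * w x) * this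
      simp_rw [e]
      rw [orth_lin hK hP.cont, hO.2.2 p hp, hO1.2.2 p (hp.trans (by exact_mod_cast Nat.lt_succ_self n))]
      simp
  · refine key_ratio (u := fun n y => (P n).eval y) (v := fun n y => (R n).eval y)
      (s := fun y => phi y / 2) (k := fun y => phi y * phi c / (phi y * phi c - 1)) (c := c)
      hUo hc (fun n z _ => (P n).differentiable z) (fun n z _ => (R n).differentiable z)
      ?_ ?_ ?_ ?_ hP.ratioP ?_
    · intro z hz
      exact div_ne_zero (phi_ne (phi_facts' hK hM hz).2.1) two_ne_zero
    · intro z hz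
      have h1 := (phi_facts' hK hM hz).2.1
      exact div_ne_zero (mul_ne_zero (phi_ne h1) hpc0) (phi_prod_ne hpc1 h1)
    · exact (hcc.mul continuousAt_const).div ((hcc.mul continuousAt_const).sub continuousAt_const)
        (phi_prod_ne hpc1 hpc1)
    · intro z hz
      obtain ⟨h1, h2, -⟩ := phi_facts' hK hM hz
      have h3 := phi_prod_ne hpc1 h2
      have h4 := phi_ne h2
      have h5 : z - c = (phi z + (phi z)⁻¹ - phi c - (phi c)⁻¹) / 2 := by
        linear_combination (hpc - h1) / 2
      rw [h5]
      field_simp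
      ring
    · filter_upwards [hmulev] with n hn z _ using hn z
  · intro z hz
    obtain ⟨h1, h2, -⟩ := phi_facts' hK hM hz
    have h4 := phi_ne h2
    refine ratio_lemma (u := fun n y => stj μ w (P n) y)
      (v := fun n y => stj μ (fun x => w x * ((x : ℂ) - c)) (R n) y)
      (h := 1 / (2 * phi z) - phi c / 2)
      (div_ne_zero one_ne_zero (mul_ne_zero two_ne_zero h4)) ?_ (hP.ratioQ z hz) ?_
    · intro h0
      apply phi_prod_ne hpc1 h2
      field_simp at h0
      linear_combination -h0
    · refine ((hP.ratioQ z hz).sub (hρl.comp tendsto_fst)).congr' ?_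
      have hev : ∀ᶠ p : ℕ × ℂ in atTop ×ˢ 𝓝 z, (∀ z, (z - c) * (R p.1).eval z =
          (P (p.1 + 1)).eval z - ρ p.1 * (P p.1).eval z) ∧ p.2 ∈ (msuppC μ)ᶜ :=
        hmulev.prod_mk (hUo.mem_nhds hz)
      filter_upwards [hev, (hP.ratioQ z hz).eventually_ne
        (div_ne_zero one_ne_zero (mul_ne_zero two_ne_zero h4))] with p hp hne
      have hne' : stj μ w (P p.1) p.2 ≠ 0 := fun h0 => hne (by simp [h0])
      have e : stj μ (fun x => w x * ((x : ℂ) - c)) (R p.1) p.2 =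
          stj μ w (P (p.1 + 1) - Polynomial.C (ρ p.1) * P p.1) p.2 := by
        unfold stj
        congr 1; ext x
        have := hp.1 x
        simp only [Polynomial.eval_sub, Polynomial.eval_mul, Polynomial.eval_C]
        linear_combination (w x * ((x : ℂ) - p.2)⁻¹) * this
      simp only [Function.comp]
      rw [e, stj_lin hK hP.cont _ _ _ hp.2]
      field_simp
  · refine (hP.norm.mul hρl.neg).congr' ?_
    filter_upwards [hmulev, hmul, hP.op, hop1] with n hnev hn hO hO1
    obtain ⟨hm, hd⟩ := monic_step hO1.1 hO1.2.1 hO.2.1 (ρ n)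
    rw [← hn] at hm hd
    have hRm : (R n).Monic := (Polynomial.monic_X_sub_C c).of_mul_monic_left hm
    have hRd : (R n).natDegree = n := by
      rw [Polynomial.natDegree_mul (Polynomial.X_sub_C_ne_zero c) hRm.ne_zero,
        Polynomial.natDegree_X_sub_C] at hd
      omega
    have e : ∀ x : ℝ, (R n).eval (x : ℂ) * (R n).eval (x : ℂ) * (w x * ((x : ℂ) - c)) =
        (R n).eval (x : ℂ) * (P (n + 1) - Polynomial.C (ρ n) * P n).eval (x : ℂ) * w x := by
      intro x
      have := hnev x
      simp only [Polynomial.eval_sub, Polynomial.eval_mul, Polynomial.eval_C]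
      linear_combination ((R n).eval (x : ℂ) * w x) * this
    simp_rw [e]
    rw [orth_lin hK hP.cont, hO1.2.2 (R n) (by
      rw [Polynomial.degree_eq_natDegree hRm.ne_zero, hRd]; exact_mod_cast Nat.lt_succ_self n)]
    have hsub : (R n - P n).degree < n := by
      have := Polynomial.degree_sub_lt_left (p := R n) (q := P n) (by
        rw [Polynomial.degree_eq_natDegree hRm.ne_zero,
          Polynomial.degree_eq_natDegree hO.1.ne_zero, hRd, hO.2.1]) hRm.ne_zero
        (by rw [hRm.leadingCoeff, hO.1.leadingCoeff])
      rwa [Polynomial.degree_eq_natDegree hRm.ne_zero, hRd] at this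
    have h0 := hO.2.2 _ hsub
    have e2 : ∫ x : ℝ, (R n).eval (x : ℂ) * (P n).eval (x : ℂ) * w x ∂μ =
        ∫ x : ℝ, (P n).eval (x : ℂ) * (P n).eval (x : ℂ) * w x ∂μ := by
      have h3 := int_lin hK (((cont_poly _ (R n)).mul (cont_poly _ (P n))).mul hP.cont)
        (((cont_poly _ (P n)).mul (cont_poly _ (P n))).mul hP.cont) 1
      have h4 : ∫ x : ℝ, (R n - P n).eval (x : ℂ) * (P n).eval (x : ℂ) * w x ∂μ =
          ∫ x : ℝ, ((R n).eval (x : ℂ) * (P n).eval (x : ℂ) * w x -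
            1 * ((P n).eval (x : ℂ) * (P n).eval (x : ℂ) * w x)) ∂μ := by
        congr 1; ext x; simp; ring
      rw [h4] at h0
      simp only [Pi.mul_apply] at h3
      rw [h3] at h0
      have := sub_eq_zero.1 h0
      rw [one_mul] at this
      exact this
    rw [e2]
    ring

lemma div_step {μ : Measure ℝ} [IsFiniteMeasure μ] (hK : IsCompact (msupp μ))
    {l : ℕ → Polynomial ℝ} {a b : ℕ → ℝ} (hM : IsM01 μ l a b) {d : ℂ} (hd : d ∉ msuppC μ)
    {w : ℝ → ℂ} {K : ℂ} (h : ∃ P, RatioInv μ l w K P) :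
    ∃ P, RatioInv μ l (fun x => w x * ((x : ℂ) - d)⁻¹) (K * (-(2 / phi d))) P := by
  obtain ⟨P, hP⟩ := h
  set σ : ℕ → ℂ := fun n => stj μ w (P (n + 1)) d / stj μ w (P n) d with hσ
  set R : ℕ → Polynomial ℂ := fun n => P n - Polynomial.C (σ (n - 1)) * P (n - 1) with hR
  have hRs : ∀ n, R (n + 1) = P (n + 1) - Polynomial.C (σ n) * P n := fun n => rfl
  obtain ⟨hpd, hpd1, hdc⟩ := phi_facts' hK hM hd
  have hpd0 := phi_ne hpd1
  have hσl : Tendsto σ atTop (𝓝 (1 / (2 * phi d))) :=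
    at_point (F := fun n y => stj μ w (P (n + 1)) y / stj μ w (P n) y) (hP.ratioQ d hd)
  have hw' : ContinuousOn (fun x : ℝ => w x * ((x : ℂ) - d)⁻¹) (msupp μ) :=
    hP.cont.mul (cont_cauchy hd)
  have hop1 : ∀ᶠ n in atTop, IsOP μ w (n + 1) (P (n + 1)) :=
    (tendsto_add_atTop_nat 1).eventually hP.op
  have hUo : IsOpen (msuppC μ)ᶜ := (msuppC_closed hK).isOpen_compl
  have hzero : ∀ᶠ n in atTop, stj μ w (R (n + 1)) d = 0 := by
    filter_upwards [hσl.eventually_ne (div_ne_zero one_ne_zero (mul_ne_zero two_ne_zero hpd0))] with n hn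
    have hne : stj μ w (P n) d ≠ 0 := fun h0 => hn (by simp [hσ, h0])
    rw [hRs, stj_lin hK hP.cont _ _ _ hd]
    simp only [hσ]
    field_simp
    ring
  have hop : ∀ᶠ n in atTop, IsOP μ (fun x => w x * ((x : ℂ) - d)⁻¹) (n + 1) (R (n + 1)) := by
    filter_upwards [hP.op, hop1, hzero] with n hO hO1 hz
    obtain ⟨hm, hdeg⟩ := monic_step hO1.1 hO1.2.1 hO.2.1 (σ n)
    refine ⟨hm, hdeg, ?_⟩
    intro p hp
    set q : Polynomial ℂ := (p - Polynomial.C (p.eval d)) /ₘ (Polynomial.X - Polynomial.C d) with hq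
    have hmul : (Polynomial.X - Polynomial.C d) * q = p - Polynomial.C (p.eval d) := by
      rw [hq, Polynomial.mul_divByMonic_eq_iff_isRoot]; simp
    have hqd : q.degree < n := by
      by_cases hq0 : q = 0
      · rw [hq0, Polynomial.degree_zero]; exact WithBot.bot_lt_coe n
      have hp0 : p ≠ 0 := by intro h0; apply hq0; rw [hq, h0]; simp
      rw [← Polynomial.natDegree_lt_iff_degree_lt hq0]
      rw [← Polynomial.natDegree_lt_iff_degree_lt hp0] at hp
      have h1 := congrArg Polynomial.natDegree hmul
      rw [Polynomial.natDegree_mul (Polynomial.X_sub_C_ne_zero d) hq0,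
        Polynomial.natDegree_X_sub_C, Polynomial.natDegree_sub_C] at h1
      omega
    have h1 : ∫ x : ℝ, q.eval (x : ℂ) * (R (n + 1)).eval (x : ℂ) * w x ∂μ = 0 := by
      rw [hRs, orth_lin hK hP.cont, hO.2.2 q hqd,
        hO1.2.2 q (hqd.trans (by exact_mod_cast Nat.lt_succ_self n))]
      simp
    have h2 := int_lin hK (((cont_poly _ q).mul (cont_poly _ (R (n + 1)))).mul hP.cont)
      (((cont_poly _ (R (n + 1))).mul hP.cont).mul (cont_cauchy hd)) (-(p.eval d))
    have h3 : ∫ x : ℝ, (R (n + 1)).eval (x : ℂ) * w x * ((x : ℂ) - d)⁻¹ ∂μ = 0 := hz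
    simp only [Pi.mul_apply] at h2
    rw [h1, h3, mul_zero, sub_zero] at h2
    rw [← h2]
    apply integral_congr_ae
    filter_upwards [ae_msupp μ] with x hx
    have hne := sub_ne hd hx
    have h4 := congrArg (Polynomial.eval (x : ℂ)) hmul
    simp only [Polynomial.eval_mul, Polynomial.eval_sub, Polynomial.eval_X, Polynomial.eval_C] at h4
    field_simp
    linear_combination -((R (n + 1)).eval (x : ℂ) * w x) * h4
  refine ⟨R, hw', ev_shift hop, ?_, ?_, ?_⟩
  · intro z hz
    obtain ⟨h1, h2, -⟩ := phi_facts' hK hM hz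
    have h4 := phi_ne h2
    refine shift_down (F := fun n y => (R (n + 1)).eval y / (R n).eval y) ?_
    refine ratio_lemma (u := fun n y => (P n).eval y) (v := fun n y => (R (n + 1)).eval y)
      (h := phi z / 2 - 1 / (2 * phi d)) (div_ne_zero h4 two_ne_zero) ?_ (hP.ratioP z hz) ?_
    · intro h0
      apply phi_prod_ne hpd1 h2
      field_simp at h0
      linear_combination h0
    · refine ((hP.ratioP z hz).sub (hσl.comp tendsto_fst)).congr' ?_
      filter_upwards [(hP.ratioP z hz).eventually_ne (div_ne_zero h4 two_ne_zero)] with p hne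
      have hne' : (P p.1).eval p.2 ≠ 0 := fun h0 => hne (by simp [h0])
      simp only [Function.comp, hRs, Polynomial.eval_sub, Polynomial.eval_mul, Polynomial.eval_C]
      field_simp
  · intro z hz
    refine shift_down (F := fun n y => stj μ (fun x => w x * ((x : ℂ) - d)⁻¹) (R (n + 1)) y /
      stj μ (fun x => w x * ((x : ℂ) - d)⁻¹) (R n) y) ?_
    revert z
    refine key_ratio (u := fun n y => stj μ w (P n) y)
      (v := fun n y => stj μ (fun x => w x * ((x : ℂ) - d)⁻¹) (R (n + 1)) y)
      (s := fun y => 1 / (2 * phi y)) (k := fun y => -1 / (phi y * phi d - 1)) (c := d)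
      hUo hd (fun n z hz => stieltjes_diff hK ((cont_poly _ _).mul hP.cont) hz)
      (fun n z hz => stieltjes_diff hK ((cont_poly _ _).mul hw') hz) ?_ ?_ ?_ ?_ hP.ratioQ ?_
    · intro z hz
      have := phi_ne (phi_facts' hK hM hz).2.1
      exact div_ne_zero one_ne_zero (mul_ne_zero two_ne_zero this)
    · intro z hz
      have h1 := (phi_facts' hK hM hz).2.1
      exact div_ne_zero (by norm_num) (phi_prod_ne hpd1 h1)
    · exact continuousAt_const.div ((hdc.mul continuousAt_const).sub continuousAt_const)
        (phi_prod_ne hpd1 hpd1)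
    · intro z hz
      obtain ⟨h1, h2, -⟩ := phi_facts' hK hM hz
      have h3 := phi_prod_ne hpd1 h2
      have h4 := phi_ne h2
      have h5 : z - d = (phi z + (phi z)⁻¹ - phi d - (phi d)⁻¹) / 2 := by
        linear_combination (hpd - h1) / 2
      rw [h5]
      field_simp
      ring
    · filter_upwards [hzero] with n hn z hz
      have h3 : ∫ x : ℝ, (R (n + 1)).eval (x : ℂ) * w x * ((x : ℂ) - d)⁻¹ ∂μ = 0 := hn
      have h2 := int_lin hK (((cont_poly _ (R (n + 1))).mul hP.cont).mul (cont_cauchy hz))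
        (((cont_poly _ (R (n + 1))).mul hP.cont).mul (cont_cauchy hd)) 1
      simp only [Pi.mul_apply] at h2
      rw [h3, mul_zero, sub_zero] at h2
      have h6 : stj μ w (R (n + 1)) z = stj μ w (P (n + 1)) z - σ n * stj μ w (P n) z := by
        rw [hRs, stj_lin hK hP.cont _ _ _ hz]
      change (z - d) * _ = stj μ w (P (n + 1)) z - σ n * stj μ w (P n) z
      rw [← h6]
      unfold stj
      rw [← h2, ← integral_const_mul]
      apply integral_congr_ae
      filter_upwards [ae_msupp μ] with x hx
      have := sub_ne hd hx
      have := sub_ne hz hx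
      field_simp
      ring
  · rw [← tendsto_add_atTop_iff_nat 1]
    have ht := ((tau_ratio hM).inv₀ (by norm_num)).pow 2
    have h1 := (hP.norm.mul hσl.neg).mul ht
    have e : K * -(1 / (2 * phi d)) * ((1 / 2 : ℂ)⁻¹) ^ 2 = K * (-(2 / phi d)) := by
      field_simp
    rw [e] at h1
    refine h1.congr' ?_
    filter_upwards [hP.op, hop1, hop, hzero] with n hO hO1 hR1 hz
    have hlow : ((Polynomial.X - Polynomial.C d) * P n - R (n + 1)).degree < ((n + 1 : ℕ) : WithBot ℕ) := by
      have hm : ((Polynomial.X - Polynomial.C d) * P n).Monic :=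
        (Polynomial.monic_X_sub_C d).mul hO.1
      have hdg : ((Polynomial.X - Polynomial.C d) * P n).natDegree = n + 1 := by
        rw [Polynomial.natDegree_mul (Polynomial.X_sub_C_ne_zero d) hO.1.ne_zero,
          Polynomial.natDegree_X_sub_C, hO.2.1, add_comm]
      have := Polynomial.degree_sub_lt_left (p := (Polynomial.X - Polynomial.C d) * P n)
        (q := R (n + 1)) (by
        rw [Polynomial.degree_eq_natDegree hm.ne_zero,
          Polynomial.degree_eq_natDegree hR1.1.ne_zero, hdg, hR1.2.1]) hm.ne_zero
        (by rw [hm.leadingCoeff, hR1.1.leadingCoeff])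
      rwa [Polynomial.degree_eq_natDegree hm.ne_zero, hdg] at this
    have h0 := hR1.2.2 _ hlow
    have hA : ∫ x : ℝ, (P n).eval (x : ℂ) * (R (n + 1)).eval (x : ℂ) * w x ∂μ =
        -σ n * ∫ x : ℝ, (P n).eval (x : ℂ) * (P n).eval (x : ℂ) * w x ∂μ := by
      rw [hRs, orth_lin hK hP.cont, hO1.2.2 (P n) (by
        rw [Polynomial.degree_eq_natDegree hO.1.ne_zero, hO.2.1]
        exact_mod_cast Nat.lt_succ_self n)]
      ring
    have h3 := int_lin hK (((cont_poly _ (P n)).mul (cont_poly _ (R (n + 1)))).mul hP.cont)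
        (((cont_poly _ (R (n + 1))).mul (cont_poly _ (R (n + 1)))).mul hw') 1
    simp only [Pi.mul_apply] at h3
    have h4 : ∫ x : ℝ, ((Polynomial.X - Polynomial.C d) * P n - R (n + 1)).eval (x : ℂ) *
        (R (n + 1)).eval (x : ℂ) * (w x * ((x : ℂ) - d)⁻¹) ∂μ =
        ∫ x : ℝ, ((P n).eval (x : ℂ) * (R (n + 1)).eval (x : ℂ) * w x -
          1 * ((R (n + 1)).eval (x : ℂ) * (R (n + 1)).eval (x : ℂ) *
            (w x * ((x : ℂ) - d)⁻¹))) ∂μ := by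
      apply integral_congr_ae
      filter_upwards [ae_msupp μ] with x hx
      have := sub_ne hd hx
      simp only [Polynomial.eval_mul, Polynomial.eval_sub, Polynomial.eval_X, Polynomial.eval_C]
      field_simp
    rw [h4, h3, hA, one_mul, sub_eq_zero] at h0
    rw [← h0]
    have t1 := tau_ne hM.onp n
    have t2 := tau_ne hM.onp (n + 1)
    field_simp

/-! ### Iterating the steps -/

lemma mult_pow {μ : Measure ℝ} [IsFiniteMeasure μ] (hK : IsCompact (msupp μ))
    {l : ℕ → Polynomial ℝ} {a b : ℕ → ℝ} (hM : IsM01 μ l a b) {c : ℂ} (hc : c ∉ msuppC μ)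
    {w : ℝ → ℂ} {K : ℂ} (h : ∃ P, RatioInv μ l w K P) (k : ℕ) :
    ∃ P, RatioInv μ l (fun x => w x * ((x : ℂ) - c) ^ k) (K * (-(phi c / 2)) ^ k) P := by
  induction k with
  | zero => simpa using h
  | succ k ih => simpa only [pow_succ, mul_assoc] using mult_step hK hM hc ih

lemma div_pow_step {μ : Measure ℝ} [IsFiniteMeasure μ] (hK : IsCompact (msupp μ))
    {l : ℕ → Polynomial ℝ} {a b : ℕ → ℝ} (hM : IsM01 μ l a b) {d : ℂ} (hd : d ∉ msuppC μ)
    {w : ℝ → ℂ} {K : ℂ} (h : ∃ P, RatioInv μ l w K P) (k : ℕ) :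
    ∃ P, RatioInv μ l (fun x => w x * (((x : ℂ) - d)⁻¹) ^ k) (K * (-(2 / phi d)) ^ k) P := by
  induction k with
  | zero => simpa using h
  | succ k ih => simpa only [pow_succ, mul_assoc] using div_step hK hM hd ih

lemma mult_prod {μ : Measure ℝ} [IsFiniteMeasure μ] (hK : IsCompact (msupp μ))
    {l : ℕ → Polynomial ℝ} {a b : ℕ → ℝ} (hM : IsM01 μ l a b) {ι : Type*} (c : ι → ℂ)
    (A : ι → ℕ) (hc : ∀ i, c i ∉ msuppC μ)
    {w : ℝ → ℂ} {K : ℂ} (h : ∃ P, RatioInv μ l w K P) (s : Finset ι) :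
    ∃ P, RatioInv μ l (fun x => w x * ∏ i ∈ s, ((x : ℂ) - c i) ^ A i)
      (K * ∏ i ∈ s, (-(phi (c i) / 2)) ^ A i) P := by
  induction s using Finset.induction_on with
  | empty => simpa using h
  | insert i s hi ih =>
    have := mult_pow hK hM (hc i) ih (A i)
    simp_rw [Finset.prod_insert hi]
    convert this using 3
    · ext x; ring
    · ring

lemma div_prod {μ : Measure ℝ} [IsFiniteMeasure μ] (hK : IsCompact (msupp μ))
    {l : ℕ → Polynomial ℝ} {a b : ℕ → ℝ} (hM : IsM01 μ l a b) {ι : Type*} (d : ι → ℂ)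
    (B : ι → ℕ) (hd : ∀ i, d i ∉ msuppC μ)
    {w : ℝ → ℂ} {K : ℂ} (h : ∃ P, RatioInv μ l w K P) (s : Finset ι) :
    ∃ P, RatioInv μ l (fun x => w x * ∏ i ∈ s, (((x : ℂ) - d i)⁻¹) ^ B i)
      (K * ∏ i ∈ s, (-(2 / phi (d i))) ^ B i) P := by
  induction s using Finset.induction_on with
  | empty => simpa using h
  | insert i s hi ih =>
    have := div_pow_step hK hM (hd i) ih (B i)
    simp_rw [Finset.prod_insert hi]
    convert this using 3
    · ext x; ring
    · ring

/-- For large `n` nothing of degree `< n` is orthogonal to all lower degrees. -/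
lemma deg_lower {μ : Measure ℝ} [IsFiniteMeasure μ] (hK : IsCompact (msupp μ))
    {w : ℝ → ℂ} (hw : ContinuousOn w (msupp μ)) {P : ℕ → Polynomial ℂ} {N : ℕ}
    (hP : ∀ n ≥ N, IsOP μ w n (P n) ∧
      ∫ x : ℝ, (P n).eval (x : ℂ) * (P n).eval (x : ℂ) * w x ∂μ ≠ 0)
    {n : ℕ} (hn : 2 * N < n) {q : Polynomial ℂ} (hq : q.Monic)
    (hq2 : ∀ p : Polynomial ℂ, p.degree < n →
      ∫ x : ℝ, p.eval (x : ℂ) * q.eval (x : ℂ) * w x ∂μ = 0) : n ≤ q.natDegree := by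
  by_contra hlt
  push Not at hlt
  set m := q.natDegree with hm
  set k := max m N with hk
  obtain ⟨hO, hne⟩ := hP k (le_max_right _ _)
  set R : Polynomial ℂ := Polynomial.X ^ (k - m) * q with hR
  have hRm : R.Monic := (Polynomial.monic_X_pow _).mul hq
  have hRd : R.natDegree = k := by
    rw [hR, Polynomial.natDegree_mul (Polynomial.monic_X_pow _).ne_zero hq.ne_zero,
      Polynomial.natDegree_X_pow, ← hm]
    have := le_max_left m N
    omega
  have hsub : (R - P k).degree < k := by
    have := Polynomial.degree_sub_lt_left (p := R) (q := P k) (by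
      rw [Polynomial.degree_eq_natDegree hRm.ne_zero,
        Polynomial.degree_eq_natDegree hO.1.ne_zero, hRd, hO.2.1]) hRm.ne_zero
      (by rw [hRm.leadingCoeff, hO.1.leadingCoeff])
    rwa [Polynomial.degree_eq_natDegree hRm.ne_zero, hRd] at this
  have h1 := hO.2.2 _ hsub
  have h2 := hq2 (Polynomial.X ^ (k - m) * P k) (by
    have hmon : (Polynomial.X ^ (k - m) * P k).Monic := (Polynomial.monic_X_pow _).mul hO.1
    rw [← Polynomial.natDegree_lt_iff_degree_lt hmon.ne_zero,
      Polynomial.natDegree_mul (Polynomial.monic_X_pow _).ne_zero hO.1.ne_zero,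
      Polynomial.natDegree_X_pow, hO.2.1]
    rcases le_total m N with h | h
    · rw [hk, max_eq_right h]; omega
    · rw [hk, max_eq_left h]; omega)
  have h3 := int_lin hK (((cont_poly _ (Polynomial.X ^ (k - m) * P k)).mul (cont_poly _ q)).mul hw)
    (((cont_poly _ (R - P k)).mul (cont_poly _ (P k))).mul hw) 1
  simp only [Pi.mul_apply] at h3
  rw [h1, h2, mul_zero, sub_zero] at h3
  apply hne
  rw [← h3]
  congr 1; ext x
  simp [hR]; ring

/-! ### Conclusion -/

lemma const_eq {h ℓ : ℕ} (pc : Fin h → ℂ) (pd : Fin ℓ → ℂ) (A : Fin h → ℕ) (B : Fin ℓ → ℕ) :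
    (1 * (∏ i, (-(pc i / 2)) ^ A i) * ∏ j, (-(2 / pd j)) ^ B j)⁻¹ =
      (-2 : ℂ) ^ ((∑ i, (A i : ℤ)) - ∑ j, (B j : ℤ)) * (∏ j, pd j ^ B j) / ∏ i, pc i ^ A i := by
  have e1 : ∏ i, (-(pc i / 2)) ^ A i = (∏ i, pc i ^ A i) / (-2 : ℂ) ^ (∑ i, A i) := by
    rw [← Finset.prod_pow_eq_pow_sum, ← Finset.prod_div_distrib]
    refine Finset.prod_congr rfl fun i _ => ?_
    rw [← div_pow, div_neg]
  have e2 : ∏ j, (-(2 / pd j)) ^ B j = (-2 : ℂ) ^ (∑ j, B j) / ∏ j, pd j ^ B j := by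
    rw [← Finset.prod_pow_eq_pow_sum, ← Finset.prod_div_distrib]
    refine Finset.prod_congr rfl fun i _ => ?_
    rw [← div_pow, neg_div]
  have h2 : (-2 : ℂ) ≠ 0 := by norm_num
  rw [e1, e2, zpow_sub₀ h2, ← Nat.cast_sum, ← Nat.cast_sum, zpow_natCast, zpow_natCast, one_mul,
    mul_inv, inv_div, inv_div]
  ring

lemma final_aux {μ : Measure ℝ} [IsFiniteMeasure μ] (hK : IsCompact (msupp μ))
    {l : ℕ → Polynomial ℝ} (ho : IsOrthonormalPolys μ l)
    {w : ℝ → ℂ} {K : ℂ} (hK0 : K ≠ 0) {P : ℕ → Polynomial ℂ} (hP : RatioInv μ l w K P)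
    {Q : ℕ → Polynomial ℂ} (hQ : ∀ n, IsQPoly μ w n (Q n)) :
    Tendsto (fun n => (∫ x : ℝ, ((Q n).eval (x : ℂ)) ^ 2 * w x ∂μ)⁻¹ /
      ((l n).leadingCoeff : ℂ) ^ 2) atTop (𝓝 K⁻¹) := by
  have hev : ∀ᶠ n in atTop, IsOP μ w n (P n) ∧
      ∫ x : ℝ, (P n).eval (x : ℂ) * (P n).eval (x : ℂ) * w x ∂μ ≠ 0 := by
    filter_upwards [hP.op, hP.norm.eventually_ne hK0] with n h1 h2
    exact ⟨h1, left_ne_zero_of_mul h2⟩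
  obtain ⟨N, hN⟩ := eventually_atTop.1 hev
  refine (hP.norm.inv₀ hK0).congr' ?_
  filter_upwards [eventually_gt_atTop (2 * N)] with n hn
  obtain ⟨hO, -⟩ := hN n (by omega)
  obtain ⟨hm, horth, hmin⟩ := hQ n
  have hlow := deg_lower hK hP.cont hN hn hm horth
  have hup := hmin (P n) hO.1.ne_zero hO.2.2
  have hdeg : (Q n).natDegree = n := by
    have := Polynomial.natDegree_le_natDegree hup
    rw [hO.2.1] at this
    omega
  have hsub : (Q n - P n).degree < n := by
    have := Polynomial.degree_sub_lt_left (p := Q n) (q := P n) (by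
      rw [Polynomial.degree_eq_natDegree hm.ne_zero,
        Polynomial.degree_eq_natDegree hO.1.ne_zero, hdeg, hO.2.1]) hm.ne_zero
      (by rw [hm.leadingCoeff, hO.1.leadingCoeff])
    rwa [Polynomial.degree_eq_natDegree hm.ne_zero, hdeg] at this
  have h1 := horth _ hsub
  have h2 := hO.2.2 _ hsub
  have h3 := int_lin hK (((cont_poly _ (Q n - P n)).mul (cont_poly _ (Q n))).mul hP.cont)
    (((cont_poly _ (Q n - P n)).mul (cont_poly _ (P n))).mul hP.cont) (-1)
  have h4 := int_lin hK (((cont_poly _ (Q n)).mul (cont_poly _ (Q n))).mul hP.cont)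
    (((cont_poly _ (P n)).mul (cont_poly _ (P n))).mul hP.cont) 1
  simp only [Pi.mul_apply] at h3 h4
  rw [h1, h2] at h3
  have e : ∫ x : ℝ, ((Q n - P n).eval (x : ℂ) * (Q n).eval (x : ℂ) * w x -
      -1 * ((Q n - P n).eval (x : ℂ) * (P n).eval (x : ℂ) * w x)) ∂μ =
      ∫ x : ℝ, ((Q n).eval (x : ℂ) * (Q n).eval (x : ℂ) * w x -
        1 * ((P n).eval (x : ℂ) * (P n).eval (x : ℂ) * w x)) ∂μ := by
    congr 1; ext x; simp; ring
  rw [e, h4, one_mul, mul_zero, sub_zero] at h3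
  have h5 := sub_eq_zero.1 h3
  simp_rw [pow_two ((Q n).eval _)]
  rw [h5, mul_inv, div_eq_mul_inv]

/-- Theorem 2, formula (3.20). For `μ ∈ M(0,1)`,
`κ_n²/τ_n² → (-2)^{A-B} ∏ φ(d_j)^{B_j} / ∏ φ(c_i)^{A_i}`, where
`κ_n² = (∫ Q_n² r dμ)⁻¹` and `τ_n` is the leading coefficient of `l_n`. -/
theorem leading_coefficient_asymptotics_Q
    (μ : Measure ℝ) [IsFiniteMeasure μ] (l : ℕ → Polynomial ℝ) (a b : ℕ → ℝ)
    (hcompact : IsCompact (msupp μ)) (hinf : (msupp μ).Infinite)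
    (hM01 : IsM01 μ l a b)
    (h ℓ : ℕ) (c : Fin h → ℂ) (d : Fin ℓ → ℂ) (A : Fin h → ℕ) (B : Fin ℓ → ℕ)
    (hA : ∀ i, 0 < A i) (hB : ∀ j, 0 < B j)
    (hc : ∀ i, c i ∉ msuppC μ) (hd : ∀ j, d j ∉ msuppC μ)
    (hcd : ∀ i j, c i ≠ d j)
    (Q : ℕ → Polynomial ℂ) (hQ : ∀ n, IsQPoly μ (ratFn c d A B) n (Q n))
    (κsq : ℕ → ℂ)
    (hκsq : ∀ n, κsq n =
      (∫ x, ((Q n).eval (x : ℂ)) ^ 2 * ratFn c d A B x ∂μ)⁻¹) :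
    Tendsto (fun n => κsq n / (((l n).leadingCoeff : ℂ)) ^ 2) atTop
      (nhds ((-2 : ℂ) ^ ((∑ i, (A i : ℤ)) - ∑ j, (B j : ℤ)) *
        (∏ j, phi (d j) ^ (B j)) / ∏ i, phi (c i) ^ (A i))) := by
  obtain ⟨P, hP⟩ := div_prod hcompact hM01 d B hd
    (mult_prod hcompact hM01 c A hc ⟨_, base_inv hcompact hM01⟩ Finset.univ) Finset.univ
  have hw : (fun x : ℝ => 1 * (∏ i, ((x : ℂ) - c i) ^ A i) * ∏ j, (((x : ℂ) - d j)⁻¹) ^ B j) =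
      ratFn c d A B := by
    ext x
    simp only [ratFn, one_mul, div_eq_mul_inv, inv_pow, Finset.prod_inv_distrib]
  rw [hw] at hP
  have hpc : ∀ i, phi (c i) ≠ 0 := fun i => phi_ne (phi_facts' hcompact hM01 (hc i)).2.1
  have hpd : ∀ j, phi (d j) ≠ 0 := fun j => phi_ne (phi_facts' hcompact hM01 (hd j)).2.1
  rw [← const_eq (fun i => phi (c i)) (fun j => phi (d j)) A B]
  simp_rw [hκsq]
  refine final_aux hcompact hM01.onp ?_ hP hQ
  refine mul_ne_zero (mul_ne_zero one_ne_zero ?_) ?_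
  · exact Finset.prod_ne_zero_iff.2 fun i _ =>
      pow_ne_zero _ (neg_ne_zero.2 (div_ne_zero (hpc i) two_ne_zero))
  · exact Finset.prod_ne_zero_iff.2 fun j _ =>
      pow_ne_zero _ (neg_ne_zero.2 (div_ne_zero two_ne_zero (hpd j)))
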